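/- Let P(a,c) := 759·a^8·c^{16} + 2576·a^{12}·c^{12} + 759·a^{16}·c^8 + a^{24}, Q(a,b,c) := 759·a^{16}·b^8 − 2576·a^{12}·b^{12} + 759·a^8·b^{16} − 1518·a^8·b^8·c^8, F(a,b,c) := c^{24} + P(a,c) + P(b,c) + Q(a,b,c), and R(u,v,w,t) := 12144·u^8·w^8·(−v^2·t^6 + 2·v^4·t^4 − v^6·t^2). Then the symmetrized weight enumerator of the ℤ/8ℤ-linear extended Golay code C_3 (the lifted extended quadratic residue code of length 24 modulo 8) satisfies swe_{C_3}(x_0,x_1,x_2,z) = 2^{−12}·[ 2^{−12}·F(4x_0, (z+x_2)−2x_1, (z+x_2)+2x_1) + F(2x_1, z−x_2, z+x_2) − ((z+x_2)^{24} + P(2x_1, z+x_2)) + R(2x_0, 2x_1, z−x_2, z+x_2) ] in ℚ[x_0,x_1,x_2,z]. -/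

import Mathlib

/-!
The Hensel lift of the factor `g` is unique, and `g` is one of two explicit polynomials, so the code
is, possibly after reversing the coordinates `0, …, 22`, the row space of an explicit systematic
generator matrix `[I | A]` modulo 8 (`code_eq`). Coordinate permutations do not affect the
enumerator, so a single code is left.

The codewords are grouped by their reduction modulo 2, a word `S` of the binary Golay code. The
fibre over `S` is a translate of twice the code modulo 4. Poisson summation modulo 4 turns its
contribution into a sum over the words of the dual code modulo 4 that vanish on `S`; Gaussian
elimination on `S` leaves few of them. The automorphisms `j ↦ j + 1` and `j ↦ 2j` of the code
reduce the 4095 nonzero words `S` to 19 representatives, for which the sum is evaluated by the kernel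
(`foundTable_eq`). The result is `nonzeroPart`, which is `4 ^ 12` times the terms of the enumerator
that involve `x₀` (`enumerator_eq`).

For `S = 0` the sum over the dual code is too long, and the contribution, which is the enumerator at
`x₀ = 0`, is obtained from self-duality: `A Aᵀ = -1` modulo 8 gives a MacWilliams identity
(`macWilliams`), which expresses the enumerator at `x₀ = 0` by its value at a point where the
variables `x₂` and `z` agree. There the fibre over zero is a weight enumerator of the binary Golay
code and the other fibres are already known. The two computations together yield
`enumerator_formula`, from which the theorem follows by expanding, as a polynomial over `ℚ` is
determined by its values.
-/

open MvPolynomial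
open scoped Classical

noncomputable section

/-- The symmetrized weight enumerator of a code `C ⊆ (ℤ/Nℤ)^n` (for `N = p^m`):
the variable `X i` for `i < m` records the number of coordinates of `p`-adic valuation `i`,
and the last variable `X m` (the variable `z`) records the number of zero coordinates. -/
def swe (p m : ℕ) {N n : ℕ} [NeZero N]
    (C : Submodule (ZMod N) (Fin n → ZMod N)) : MvPolynomial (Fin (m + 1)) ℚ :=
  ∑ c : Fin n → ZMod N, if c ∈ C then
      (∏ i : Fin m, (X (Fin.castSucc i) : MvPolynomial (Fin (m + 1)) ℚ) ^
          (Finset.univ.filter fun j => c j ≠ 0 ∧ padicValNat p (c j).val = (i : ℕ)).card)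
        * (X (Fin.last m) : MvPolynomial (Fin (m + 1)) ℚ) ^
            (Finset.univ.filter fun j => c j = 0).card
    else 0

/-- `g` is a monic irreducible degree-11 factor of `x^23 - 1` over `ℤ/pℤ`. -/
def IsQRFactor (p : ℕ) (g : Polynomial (ZMod p)) : Prop :=
  g.Monic ∧ g.natDegree = 11 ∧ Irreducible g ∧ g ∣ (Polynomial.X ^ 23 - 1)

/-- `gm` is the (Hensel) lift of `g` to `ℤ/Nℤ` and `C` is the associated lifted extended
cyclic quadratic residue code of length 24: the extension by an overall parity check of the
cyclic code of length 23 generated by `gm`. -/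
def IsLiftedQR {p N : ℕ} (hpN : p ∣ N) (g : Polynomial (ZMod p)) (gm : Polynomial (ZMod N))
    (C : Submodule (ZMod N) (Fin 24 → ZMod N)) : Prop :=
  gm.Monic ∧ gm.natDegree = 11 ∧ gm ∣ (Polynomial.X ^ 23 - 1) ∧
    gm.map (ZMod.castHom hpN (ZMod p)) = g ∧
    ∀ c : Fin 24 → ZMod N, c ∈ C ↔
      ((∃ f : Polynomial (ZMod N), ∀ j : Fin 23,
          c (Fin.castSucc j) = ((f * gm) %ₘ (Polynomial.X ^ 23 - 1)).coeff (j : ℕ)) ∧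
        c (Fin.last 23) = - ∑ j : Fin 23, c (Fin.castSucc j))

/-- `P(a,c)` from the statement. -/
def Pb {σ : Type*} (a c : MvPolynomial σ ℚ) : MvPolynomial σ ℚ :=
  759 * a ^ 8 * c ^ 16 + 2576 * a ^ 12 * c ^ 12 + 759 * a ^ 16 * c ^ 8 + a ^ 24

/-- `Q(a,b,c)` from the statement. -/
def Qb {σ : Type*} (a b c : MvPolynomial σ ℚ) : MvPolynomial σ ℚ :=
  759 * a ^ 16 * b ^ 8 - 2576 * a ^ 12 * b ^ 12 + 759 * a ^ 8 * b ^ 16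
    - 1518 * a ^ 8 * b ^ 8 * c ^ 8

/-- `F(a,b,c)` from the statement. -/
def Fb {σ : Type*} (a b c : MvPolynomial σ ℚ) : MvPolynomial σ ℚ :=
  c ^ 24 + Pb a c + Pb b c + Qb a b c

/-- `R(u,v,w,t)` from the statement. -/
def Rb {σ : Type*} (u v w t : MvPolynomial σ ℚ) : MvPolynomial σ ℚ :=
  12144 * u ^ 8 * w ^ 8 * (-(v ^ 2 * t ^ 6) + 2 * v ^ 4 * t ^ 4 - v ^ 6 * t ^ 2)

namespace LiftedGolay

/-! ### Executable arithmetic on bit masks -/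

/-- A vector of `(ℤ/4ℤ)^24` as two bit masks: the first component holds the low bits of the 24 entries,
the second the high bits. -/
abbrev Packed := ℕ × ℕ

/-- Carry-free addition modulo 4 of packed vectors. -/
def padd (r s : Packed) : Packed := (Nat.xor r.1 s.1, Nat.xor (Nat.xor r.2 s.2) (Nat.land r.1 s.1))

/-- The number of set bits among the bits `0, …, n - 1` of `w`. -/
def popBelow (w : ℕ) : ℕ → ℕ
  | 0 => 0
  | n + 1 => Nat.add (popBelow w n) (Nat.land (Nat.shiftRight w n) 1)

/-- The number of set bits of a 24-bit mask. -/
def pop (w : ℕ) : ℕ := popBelow w 24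

/-- The first row whose entry at position `j` is odd, together with the remaining rows. -/
def pick (j : ℕ) : List Packed → Option (Packed × List Packed)
  | [] => none
  | r :: L =>
    if r.1.testBit j then some (r, L)
    else match pick j L with
      | none => none
      | some (p, M) => some (p, r :: M)

/-- The row `r` plus the multiple of the pivot row `p` (odd at position `j`) for which the entry
at `j` vanishes. -/
def clear (j : ℕ) (p r : Packed) : Packed :=
  let r₁ := if r.1.testBit j then padd r p else r
  if r₁.2.testBit j then padd r₁ (padd p p) else r₁

/-- One step of Gaussian elimination at position `j`; the pivot row is discarded. -/
def elimStep (j : ℕ) (L : List Packed) : List Packed :=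
  match pick j L with
  | none => L
  | some (p, L') => L'.map (clear j p)

/-- Gaussian elimination at those positions below `n` that belong to the mask `S`. -/
def elim (S : ℕ) (L : List Packed) : ℕ → List Packed
  | 0 => L
  | n + 1 => if S.testBit n then elimStep n (elim S L n) else elim S L n

/-- The exponents `(a, b, c, e)` of a monomial `α^a β^b w^c i^e`. -/
abbrev Key := ℕ × ℕ × ℕ × ℕ

/-- Boolean equality of exponent vectors. -/
def keyEq (k l : Key) : Bool :=
  Nat.beq k.1 l.1 && Nat.beq k.2.1 l.2.1 && Nat.beq k.2.2.1 l.2.2.1 && Nat.beq k.2.2.2 l.2.2.2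

/-- Adds one monomial with exponents `k` to a list of exponents with multiplicities. -/
def bump (k : Key) : List (Key × ℕ) → List (Key × ℕ)
  | [] => [(k, 1)]
  | (l, n) :: T => if keyEq l k then (l, n + 1) :: T else (l, n) :: bump k T

/-- The mask of the coordinates in `S` at which `u` is nonzero. -/
def dead (S : ℕ) (u : Packed) : ℕ := Nat.land (Nat.lor u.1 u.2) S

/-- The exponents of the summand belonging to the dual word `u`: outside `S` one counts the entries
`0`, `2` and `±1` of `u`, and the last component is the phase `⟨h, u⟩` modulo 4, where `h` is given
by the masks `h₁`, `h₂`. -/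
def leafKey (S h₁ h₂ : ℕ) (u : Packed) : Key :=
  (pop (Nat.xor 16777215 (Nat.lor S (Nat.lor u.1 u.2))), pop (Nat.xor u.2 (Nat.land u.1 u.2)),
    pop u.1, Nat.mod (Nat.add (pop (Nat.land u.1 h₁))
      (Nat.mul 2 (Nat.add (pop (Nat.land u.1 h₂)) (pop (Nat.land u.2 h₁))))) 4)

/-- Runs through all `ℤ/4ℤ`-combinations of the rows, translated by `acc`, and adds the monomials of
those that vanish on `S` to the table `T`. -/
def collect (S h₁ h₂ : ℕ) : List Packed → Packed → List (Key × ℕ) → List (Key × ℕ)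
  | [], acc, T => if Nat.beq (dead S acc) 0 then bump (leafKey S h₁ h₂ acc) T else T
  | r :: L, acc, T =>
    collect S h₁ h₂ L acc (collect S h₁ h₂ L (padd acc r)
      (collect S h₁ h₂ L (padd acc (padd r r))
        (collect S h₁ h₂ L (padd acc (padd r (padd r r))) T)))

/-! ### The code and its orbits as data -/

/-- The redundancy part of the systematic generator matrix `[I | A]` of the lifted code modulo 8. -/
def redundancy : List (List ℕ) :=
  [[7, 1, 4, 4, 2, 7, 3, 3, 4, 7, 2, 3],
   [2, 5, 1, 4, 0, 4, 1, 5, 3, 6, 3, 5],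
   [3, 7, 1, 5, 6, 3, 3, 0, 1, 6, 0, 4],
   [0, 3, 7, 1, 5, 6, 3, 3, 0, 1, 6, 4],
   [6, 2, 3, 7, 5, 3, 4, 1, 3, 6, 5, 2],
   [5, 1, 6, 7, 5, 2, 4, 5, 5, 0, 4, 3],
   [4, 1, 1, 6, 7, 1, 6, 0, 5, 1, 0, 7],
   [0, 4, 1, 1, 6, 7, 1, 6, 0, 5, 1, 7],
   [1, 7, 0, 5, 7, 7, 4, 6, 2, 1, 3, 4],
   [3, 6, 3, 4, 7, 2, 6, 3, 2, 5, 3, 3],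
   [3, 0, 2, 7, 6, 2, 1, 5, 7, 5, 7, 2],
   [7, 4, 4, 6, 1, 5, 5, 4, 1, 6, 7, 5]]

/-- The rows of the parity check matrix `[-Aᵀ | I]` modulo 4, packed. -/
def dualRows : List Packed :=
  [(7973, 306), (8559, 627), (17118, 1254), (34236, 2508), (68472, 3261), (133589, 3688),
   (265359, 3778), (525883, 1458), (1051766, 2916), (2099145, 4062), (4198290, 153),
   (8391395, 3090)]

/-- A representative of an orbit of binary Golay words under the group of order 253 generated by
`j ↦ j + 1` and `j ↦ 2j` on `ℤ/23ℤ`. -/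
structure Rep where
  /-- The binary word. -/
  S : ℕ
  /-- The bits of weight 2 of the systematic lift of `S` modulo 8. -/
  p₁ : ℕ
  /-- The bits of weight 4 of the systematic lift of `S` modulo 8. -/
  p₂ : ℕ
  /-- The number of translations needed to run through the orbit. -/
  shifts : ℕ
  /-- The number of multipliers needed to run through the orbit. -/
  mults : ℕ

/-- Representatives of the orbits of nonzero binary Golay words: three orbits of octads, twelve
of dodecads, three of complements of octads, and the all-one word. -/
def nonzeroReps : List Rep :=
  [⟨7973, 8232960, 3330048, 23, 11⟩,
   ⟨8559, 15339520, 12210176, 23, 11⟩,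
   ⟨8391395, 2891776, 7565312, 23, 11⟩,
   ⟨24059, 16257024, 8085504, 23, 11⟩,
   ⟨110507, 237568, 15069184, 23, 11⟩,
   ⟨119615, 4853760, 9797632, 23, 11⟩,
   ⟨126325, 8888320, 14151680, 23, 11⟩,
   ⟨145311, 16048128, 5357568, 23, 11⟩,
   ⟨513637, 8650752, 8650752, 23, 1⟩,
   ⟨8418935, 1646592, 12443648, 23, 11⟩,
   ⟨8425311, 8994816, 16592896, 23, 11⟩,
   ⟨8470481, 413696, 7081984, 23, 11⟩,
   ⟨8505081, 12279808, 15110144, 23, 11⟩,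
   ⟨8543949, 12644352, 3424256, 23, 11⟩,
   ⟨8559023, 12582912, 0, 23, 1⟩,
   ⟨392927, 14176256, 622592, 23, 11⟩,
   ⟨8612863, 13881344, 11161600, 23, 11⟩,
   ⟨8912361, 15011840, 4431872, 23, 11⟩,
   ⟨16777215, 0, 0, 1, 1⟩]

/-- Representatives of all orbits of binary Golay words. -/
def reps : List Rep := ⟨0, 0, 0, 1, 1⟩ :: nonzeroReps

/-- All triples (representative, translation, multiplier exponent), one for each Golay word. -/
def orbitList : List (Rep × ℕ × ℕ) :=
  reps.flatMap fun r => (List.range r.shifts).flatMap fun k => (List.range r.mults).map fun l =>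
    (r, k, l)

/-- The first `n` bits of the word obtained from `S` by the substitution `j ↦ m j + k` on the
positions `0, …, 22`. -/
def messageBelow (S k m : ℕ) : ℕ → ℕ
  | 0 => 0
  | n + 1 => Nat.add (messageBelow S k m n)
    (Nat.shiftLeft (Nat.land (Nat.shiftRight S (Nat.mod (Nat.add (Nat.mul m n) k) 23)) 1) n)

/-- The first 12 bits, i.e. the message bits, of the word described by an element of the
orbit list. -/
def message (t : Rep × ℕ × ℕ) : ℕ := messageBelow t.1.S t.2.1 (2 ^ t.2.2) 12

/-- The union of the bit masks `f a` for `a` in `L`. -/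
def unionOver {ι : Type} (L : List ι) (f : ι → ℕ) : ℕ := L.foldr (fun a m => Nat.lor (f a) m) 0

/-- Every message occurs in the orbit list. -/
theorem messages_cover :
    unionOver reps (fun r => unionOver (List.range r.shifts) fun k =>
      unionOver (List.range r.mults) fun l => Nat.shiftLeft 1 (message (r, k, l))) =
    2 ^ 4096 - 1 := by decide +kernel

/-- The table of monomials contributed by a fibre over a word of weight `s`. -/
def expectedTable (s : ℕ) : List (Key × ℕ) :=
  if Nat.beq s 8 then
    [((16, 0, 0, 0), 1), ((8, 8, 0, 0), 14), ((8, 8, 0, 2), 16), ((0, 16, 0, 0), 1),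
     ((6, 2, 8, 0), 48), ((6, 2, 8, 2), 64), ((4, 4, 8, 0), 128), ((4, 4, 8, 2), 96),
     ((2, 6, 8, 0), 48), ((2, 6, 8, 2), 64), ((0, 0, 16, 0), 16), ((0, 0, 16, 2), 16)]
  else if Nat.beq s 12 then [((12, 0, 0, 0), 1), ((0, 12, 0, 2), 1)]
  else if Nat.beq s 16 then [((8, 0, 0, 0), 1), ((0, 8, 0, 0), 1)]
  else [((0, 0, 0, 0), 1)]

/-- The table actually found for a representative; the counters start at zero in the order of the
expected table. -/
def foundTable (r : Rep) : List (Key × ℕ) :=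
  collect r.S r.p₁ (r.p₁ ^^^ r.p₂) (elim r.S dualRows 24) (0, 0)
    ((expectedTable (pop r.S)).map fun e => (e.1, 0))

theorem foundTable_eq : ∀ r ∈ nonzeroReps, foundTable r = expectedTable (pop r.S) := by
  decide +kernel

/-! ### Sums over row spaces and Gaussian elimination -/

/-- The sum of `F` over all `acc + ∑ nₖ rₖ`, with coefficients `nₖ ∈ ℤ/4ℤ` and `rₖ` running
through a list of rows. -/
def spanSum (F : (Fin 24 → ZMod 4) → ℂ) : List (Fin 24 → ZMod 4) → (Fin 24 → ZMod 4) → ℂ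
  | [], acc => F acc
  | r :: L, acc => ∑ n : ZMod 4, spanSum F L (acc + n • r)

theorem spanSum_cons (F : (Fin 24 → ZMod 4) → ℂ) (r : Fin 24 → ZMod 4)
    (L : List (Fin 24 → ZMod 4)) (acc : Fin 24 → ZMod 4) :
    spanSum F (r :: L) acc = spanSum (fun u => ∑ n : ZMod 4, F (u + n • r)) L acc := by
  induction L generalizing acc with
  | nil => rfl
  | cons s L ih =>
    simp only [spanSum] at ih ⊢
    rw [Finset.sum_comm]
    refine Finset.sum_congr rfl fun n _ => ?_
    rw [← ih]
    refine Finset.sum_congr rfl fun m _ => ?_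
    rw [add_right_comm]

theorem spanSum_perm (F : (Fin 24 → ZMod 4) → ℂ) {L L' : List (Fin 24 → ZMod 4)}
    (h : L.Perm L') (acc : Fin 24 → ZMod 4) : spanSum F L acc = spanSum F L' acc := by
  induction h generalizing acc with
  | nil => rfl
  | cons r _ ih => simp only [spanSum, ih]
  | swap r s L =>
    simp only [spanSum]
    rw [Finset.sum_comm]
    refine Finset.sum_congr rfl fun n _ => Finset.sum_congr rfl fun m _ => ?_
    rw [add_right_comm]
  | trans _ _ ih₁ ih₂ => rw [ih₁, ih₂]

theorem spanSum_translate (G : (Fin 24 → ZMod 4) → ℂ) (r : Fin 24 → ZMod 4)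
    (hG : ∀ u (n : ZMod 4), G (u + n • r) = G u) (L : List (Fin 24 → ZMod 4))
    (acc : Fin 24 → ZMod 4) (n : ZMod 4) : spanSum G L (acc + n • r) = spanSum G L acc := by
  induction L generalizing acc with
  | nil => exact hG acc n
  | cons s L ih =>
    simp only [spanSum]
    refine Finset.sum_congr rfl fun m _ => ?_
    rw [add_right_comm, ih]

/-- Adding multiples of the first row to the others does not change the sum. -/
theorem spanSum_shear {ι : Type} (F : (Fin 24 → ZMod 4) → ℂ) (r : Fin 24 → ZMod 4)
    (f g : ι → Fin 24 → ZMod 4) (h : ∀ x, ∃ k : ZMod 4, f x = g x + k • r) (L : List ι)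
    (acc : Fin 24 → ZMod 4) :
    spanSum F (r :: L.map f) acc = spanSum F (r :: L.map g) acc := by
  rw [spanSum_cons, spanSum_cons]
  have hG : ∀ u (m : ZMod 4), (fun u => ∑ n : ZMod 4, F (u + n • r)) (u + m • r) =
      (fun u => ∑ n : ZMod 4, F (u + n • r)) u := by
    intro u m
    beta_reduce
    rw [← Equiv.sum_comp (Equiv.addLeft m) (fun n => F (u + n • r))]
    refine Finset.sum_congr rfl fun n _ => ?_
    simp only [Equiv.coe_addLeft, add_smul, add_assoc]
  generalize (fun u => ∑ n : ZMod 4, F (u + n • r)) = G at hG ⊢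
  induction L generalizing acc with
  | nil => rfl
  | cons x L ih =>
    simp only [List.map_cons, spanSum]
    refine Finset.sum_congr rfl fun n _ => ?_
    obtain ⟨k, hk⟩ := h x
    rw [hk, smul_add, ← add_assoc, smul_smul, spanSum_translate G r hG, ih]

theorem spanSum_eq_zero (F : (Fin 24 → ZMod 4) → ℂ) (j : Fin 24) (hF : ∀ u, u j ≠ 0 → F u = 0)
    (L : List (Fin 24 → ZMod 4)) (hL : ∀ r ∈ L, r j = 0) (acc : Fin 24 → ZMod 4)
    (hacc : acc j ≠ 0) : spanSum F L acc = 0 := by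
  induction L generalizing acc with
  | nil => exact hF acc hacc
  | cons s L ih =>
    simp only [spanSum]
    refine Finset.sum_eq_zero fun n _ => ih (fun r hr => hL r (List.mem_cons_of_mem _ hr)) _ ?_
    simpa [hL s List.mem_cons_self] using hacc

/-- If `F` is supported on `u j = 0`, a row that is the only one with nonzero entry at `j` and whose
entry there is a unit can be dropped. -/
theorem spanSum_drop (F : (Fin 24 → ZMod 4) → ℂ) (j : Fin 24) (hF : ∀ u, u j ≠ 0 → F u = 0)
    (p : Fin 24 → ZMod 4) (hp : ∀ n : ZMod 4, n * p j = 0 → n = 0)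
    (L : List (Fin 24 → ZMod 4)) (hL : ∀ r ∈ L, r j = 0) :
    spanSum F (p :: L) 0 = spanSum F L 0 := by
  simp only [spanSum]
  rw [Finset.sum_eq_single 0]
  · simp
  · intro n _ hn
    refine spanSum_eq_zero F j hF L hL _ ?_
    simpa using fun h => hn (hp n h)
  · simp

theorem sum_fun_eq_spanSum (F : (Fin 24 → ZMod 4) → ℂ) (n : ℕ) (r : Fin n → Fin 24 → ZMod 4)
    (acc : Fin 24 → ZMod 4) :
    ∑ v : Fin n → ZMod 4, F (acc + ∑ k, v k • r k) = spanSum F (List.ofFn r) acc := by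
  induction n generalizing acc with
  | zero => simp [spanSum]
  | succ n ih =>
    rw [List.ofFn_succ, spanSum, ← Equiv.sum_comp (Fin.consEquiv fun _ => ZMod 4),
      Fintype.sum_prod_type]
    refine Finset.sum_congr rfl fun m _ => ?_
    rw [← ih]
    refine Finset.sum_congr rfl fun v _ => ?_
    simp [Fin.sum_univ_succ, Fin.consEquiv, add_assoc]

/-- The vector of `(ℤ/4ℤ)^24` represented by a pair of bit masks. -/
def unpack (r : Packed) : Fin 24 → ZMod 4 := fun j =>
  (if r.1.testBit j then 1 else 0) + (if r.2.testBit j then 2 else 0)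

theorem testBit_natXor (a b i : ℕ) : (Nat.xor a b).testBit i = ((a.testBit i) ^^ (b.testBit i)) :=
  Nat.testBit_xor a b i

theorem testBit_natLand (a b i : ℕ) :
    (Nat.land a b).testBit i = ((a.testBit i) && (b.testBit i)) :=
  Nat.testBit_and a b i

theorem testBit_natLor (a b i : ℕ) : (Nat.lor a b).testBit i = ((a.testBit i) || (b.testBit i)) :=
  Nat.testBit_or a b i

theorem unpack_padd (r s : Packed) : unpack (padd r s) = unpack r + unpack s := by
  funext j
  simp only [unpack, padd, Pi.add_apply, testBit_natXor, testBit_natLand]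
  generalize r.1.testBit j = a
  generalize r.2.testBit j = b
  generalize s.1.testBit j = c
  generalize s.2.testBit j = d
  revert a b c d
  decide

theorem pick_some (j : ℕ) (L : List Packed) (p : Packed) (L' : List Packed)
    (h : pick j L = some (p, L')) : p.1.testBit j = true ∧ L.Perm (p :: L') := by
  induction L generalizing p L' with
  | nil => simp [pick] at h
  | cons r L ih =>
    rw [pick] at h
    split_ifs at h with hr
    · simp only [Option.some.injEq, Prod.mk.injEq] at h
      obtain ⟨rfl, rfl⟩ := h
      exact ⟨hr, List.Perm.refl _⟩
    · cases hL : pick j L with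
      | none => simp [hL] at h
      | some q =>
        obtain ⟨q, M⟩ := q
        simp only [hL, Option.some.injEq, Prod.mk.injEq] at h
        obtain ⟨rfl, rfl⟩ := h
        obtain ⟨h₁, h₂⟩ := ih _ _ hL
        exact ⟨h₁, (h₂.cons r).trans (List.Perm.swap _ _ _)⟩

theorem clear_eq (j : ℕ) (p r : Packed) :
    ∃ k : ZMod 4, unpack (clear j p r) = unpack r + k • unpack p := by
  simp only [clear]
  split_ifs
  · exact ⟨3, by rw [unpack_padd, unpack_padd, unpack_padd]; module⟩
  · exact ⟨1, by rw [unpack_padd]; module⟩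
  · exact ⟨2, by rw [unpack_padd, unpack_padd]; module⟩
  · exact ⟨0, by module⟩

theorem unpack_clear (j : Fin 24) (p r : Packed) (hp : p.1.testBit j = true) :
    unpack (clear j p r) j = 0 := by
  simp only [clear]
  split_ifs with h₁ h₂ h₂
  all_goals
    revert h₁ h₂
    simp only [unpack, padd, testBit_natXor, testBit_natLand, hp]
    generalize r.1.testBit j = a
    generalize r.2.testBit j = b
    generalize p.2.testBit j = c
    revert a b c
    decide

theorem spanSum_elimStep (F : (Fin 24 → ZMod 4) → ℂ) (j : Fin 24)
    (hF : ∀ u, u j ≠ 0 → F u = 0) (L : List Packed) :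
    spanSum F ((elimStep j L).map unpack) 0 = spanSum F (L.map unpack) 0 := by
  rw [elimStep]
  cases h : pick j L with
  | none => rfl
  | some q =>
    obtain ⟨p, L'⟩ := q
    obtain ⟨hp, hperm⟩ := pick_some _ _ _ _ h
    rw [spanSum_perm F (hperm.map unpack), List.map_cons,
      ← spanSum_shear F (unpack p) (fun r => unpack (clear j p r)) unpack (clear_eq j p) L' 0,
      spanSum_drop F j hF]
    · simp [List.map_map, Function.comp_def]
    · simp only [unpack, hp]
      generalize p.2.testBit j = c
      revert c
      decide
    · intro r hr
      obtain ⟨s, _, rfl⟩ := List.mem_map.1 hr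
      exact unpack_clear j p s hp

theorem spanSum_elim (F : (Fin 24 → ZMod 4) → ℂ) (S : ℕ) (L : List Packed)
    (hF : ∀ j : Fin 24, S.testBit j = true → ∀ u, u j ≠ 0 → F u = 0) (n : ℕ) (hn : n ≤ 24) :
    spanSum F ((elim S L n).map unpack) 0 = spanSum F (L.map unpack) 0 := by
  induction n with
  | zero => rfl
  | succ n ih =>
    rw [elim]
    split_ifs with h
    · rw [spanSum_elimStep F ⟨n, hn⟩ (hF ⟨n, hn⟩ h), ih (by omega)]
    · exact ih (by omega)

/-! ### Evaluation of the fibre sums -/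

/-- The number `α^a β^b w^c i^e`. -/
def keyVal (α β w : ℂ) (k : Key) : ℂ := α ^ k.1 * β ^ k.2.1 * w ^ k.2.2.1 * Complex.I ^ k.2.2.2

/-- The linear combination of monomials described by a table. -/
def tableVal (α β w : ℂ) (T : List (Key × ℕ)) : ℂ :=
  (T.map fun e => (e.2 : ℂ) * keyVal α β w e.1).sum

theorem keyEq_iff (k l : Key) : keyEq k l = true ↔ k = l := by
  obtain ⟨a, b, c, d⟩ := k
  obtain ⟨a', b', c', d'⟩ := l
  simp [keyEq, and_assoc]

theorem tableVal_bump (α β w : ℂ) (k : Key) (T : List (Key × ℕ)) :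
    tableVal α β w (bump k T) = keyVal α β w k + tableVal α β w T := by
  induction T with
  | nil => simp [bump, tableVal]
  | cons e T ih =>
    obtain ⟨l, n⟩ := e
    rw [bump]
    split_ifs with h
    · obtain rfl := (keyEq_iff _ _).1 h
      simp only [tableVal, List.map_cons, List.sum_cons]
      push_cast
      ring
    · simp only [tableVal, List.map_cons, List.sum_cons] at ih ⊢
      rw [ih]
      ring

/-- The table produced by `collect` evaluates to the sum over the row space, provided the summand at
a packed vector is `c` times its monomial, or zero when the vector meets `S`. -/
theorem tableVal_collect (F : (Fin 24 → ZMod 4) → ℂ) (S h₁ h₂ : ℕ) (α β w c : ℂ)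
    (h0 : ∀ u, dead S u ≠ 0 → F (unpack u) = 0)
    (h1 : ∀ u, dead S u = 0 → F (unpack u) = c * keyVal α β w (leafKey S h₁ h₂ u))
    (L : List Packed) (acc : Packed) (T : List (Key × ℕ)) :
    c * tableVal α β w (collect S h₁ h₂ L acc T) =
      spanSum F (L.map unpack) (unpack acc) + c * tableVal α β w T := by
  induction L generalizing acc T with
  | nil =>
    rw [collect]
    simp only [List.map_nil, spanSum]
    split_ifs with h
    · rw [h1 acc (Nat.eq_of_beq_eq_true h), tableVal_bump]
      ring
    · rw [h0 acc fun h' => h (by rw [h']; rfl), zero_add]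
  | cons r L ih =>
    have h4 : ∀ f : ZMod 4 → ℂ, ∑ n : ZMod 4, f n = f 0 + f 1 + f 2 + f 3 := fun f =>
      Fin.sum_univ_four f
    rw [collect, ih, ih, ih, ih, List.map_cons, spanSum, h4]
    have e2 : (2 : ZMod 4) • unpack r = unpack r + unpack r := two_smul _ _
    have e3 : (3 : ZMod 4) • unpack r = unpack r + (unpack r + unpack r) := by module
    rw [zero_smul, add_zero, one_smul, e2, e3]
    simp only [unpack_padd]
    ring

theorem testBit_toNat (w n : ℕ) : Nat.land (Nat.shiftRight w n) 1 = (w.testBit n).toNat := by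
  have h : Nat.land (Nat.shiftRight w n) 1 = (w >>> n) &&& 1 := rfl
  rw [h, Nat.and_one_is_mod, Nat.testBit_eq_decide_div_mod_eq, Nat.shiftRight_eq_div_pow]
  rcases Nat.mod_two_eq_zero_or_one (w / 2 ^ n) with h | h <;> simp [h]

theorem pow_pop (x : ℂ) (w : ℕ) : x ^ pop w = ∏ j : Fin 24, x ^ (w.testBit j).toNat := by
  have h : ∀ n, popBelow w n = ∑ j ∈ Finset.range n, (w.testBit j).toNat := by
    intro n
    induction n with
    | zero => rfl
    | succ n ih =>
      rw [Finset.sum_range_succ, ← ih, ← testBit_toNat]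
      rfl
  rw [pop, h, Finset.prod_pow_eq_pow_sum, Finset.sum_range]

/-! ### Systematic encoding and the Poisson summation formula -/

/-- The matrix `A` of the systematic generator matrix `[I | A]`, reduced modulo `N`. -/
def redMat (N : ℕ) (i k : Fin 12) : ZMod N := (((redundancy.getD i []).getD k 0 : ℕ) : ZMod N)

/-- The codeword `(b, bA)` modulo `N`. -/
def enc (N : ℕ) (b : Fin 12 → ZMod N) : Fin 24 → ZMod N :=
  Fin.append (m := 12) (n := 12) b fun k => ∑ i, b i * redMat N i k

/-- The word `(-Av, v)` of the dual code modulo `N`. -/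
def dual (N : ℕ) (v : Fin 12 → ZMod N) : Fin 24 → ZMod N :=
  Fin.append (m := 12) (n := 12) (fun i => -∑ k, redMat N i k * v k) v

theorem prod_fin24 {M : Type*} [CommMonoid M] (f : Fin 24 → M) :
    ∏ j, f j = (∏ i : Fin 12, f (Fin.castAdd 12 i)) * ∏ k : Fin 12, f (Fin.natAdd 12 k) :=
  Fin.prod_univ_add (a := 12) (b := 12) f

theorem enc_left (N : ℕ) (b : Fin 12 → ZMod N) (i : Fin 12) : enc N b (Fin.castAdd 12 i) = b i :=
  Fin.append_left _ _ i

theorem enc_right (N : ℕ) (b : Fin 12 → ZMod N) (k : Fin 12) :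
    enc N b (Fin.natAdd 12 k) = ∑ i, b i * redMat N i k :=
  Fin.append_right _ _ k

theorem dual_left (N : ℕ) (v : Fin 12 → ZMod N) (i : Fin 12) :
    dual N v (Fin.castAdd 12 i) = -∑ k, redMat N i k * v k :=
  Fin.append_left _ _ i

theorem dual_right (N : ℕ) (v : Fin 12 → ZMod N) (k : Fin 12) : dual N v (Fin.natAdd 12 k) = v k :=
  Fin.append_right _ _ k

theorem forall_fin24 {P : Fin 24 → Prop} (h₁ : ∀ i : Fin 12, P (Fin.castAdd 12 i))
    (h₂ : ∀ k : Fin 12, P (Fin.natAdd 12 k)) (j : Fin 24) : P j :=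
  Fin.addCases (m := 12) (n := 12) (motive := fun j => P j) h₁ h₂ j

theorem enc_injective (N : ℕ) : Function.Injective (enc N) := fun b b' h => by
  funext i
  rw [← enc_left N b i, h, enc_left]

/-- The discrete Fourier transform on `ℤ/Nℤ`. -/
def hat {N : ℕ} [NeZero N] (f : ZMod N → ℂ) (u : ZMod N) : ℂ :=
  ∑ d, f d * ZMod.stdAddChar (d * u)

theorem hat_inversion {N : ℕ} [NeZero N] (f : ZMod N → ℂ) (y : ZMod N) :
    (N : ℂ) * f y = ∑ v, hat f v * ZMod.stdAddChar (-(v * y)) := by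
  simp only [hat, Finset.sum_mul]
  rw [Finset.sum_comm]
  have h : ∀ d, ∑ v : ZMod N, f d * ZMod.stdAddChar (d * v) * ZMod.stdAddChar (-(v * y)) =
      f d * if d - y = 0 then (N : ℂ) else 0 := by
    intro d
    have := AddChar.sum_mulShift (d - y) (ZMod.isPrimitive_stdAddChar N)
    rw [ZMod.card] at this
    push_cast at this
    rw [← this, Finset.mul_sum]
    refine Finset.sum_congr rfl fun v _ => ?_
    rw [mul_assoc, ← AddChar.map_add_eq_mul]
    congr 2
    ring
  simp only [h, sub_eq_zero]
  simp [mul_comm]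

theorem prod_char {N : ℕ} [NeZero N] {ι : Type} (s : Finset ι) (f : ι → ZMod N) :
    ∏ i ∈ s, (ZMod.stdAddChar (f i) : ℂ) = ZMod.stdAddChar (∑ i ∈ s, f i) := by
  induction s using Finset.induction_on with
  | empty => simp
  | insert a s ha ih => rw [Finset.prod_insert ha, Finset.sum_insert ha, ih, AddChar.map_add_eq_mul]

/-- Poisson summation for the code `[I | A]`. -/
theorem poisson (N : ℕ) [NeZero N] (f : Fin 24 → ZMod N → ℂ) :
    (N : ℂ) ^ 12 * ∑ b : Fin 12 → ZMod N, ∏ j, f j (enc N b j) =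
      ∑ v : Fin 12 → ZMod N, ∏ j, hat (f j) (dual N v j) := by
  have h1 : ∀ b : Fin 12 → ZMod N, (N : ℂ) ^ 12 * ∏ j, f j (enc N b j) =
      ∑ v : Fin 12 → ZMod N, (∏ i : Fin 12, f (Fin.castAdd 12 i) (b i) *
        ZMod.stdAddChar (b i * -∑ k, redMat N i k * v k)) *
          ∏ k : Fin 12, hat (f (Fin.natAdd 12 k)) (v k) := by
    intro b
    have h2 : (N : ℂ) ^ 12 * ∏ k : Fin 12, f (Fin.natAdd 12 k) (enc N b (Fin.natAdd 12 k)) =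
        ∏ k : Fin 12, ∑ v, hat (f (Fin.natAdd 12 k)) v *
          ZMod.stdAddChar (-(v * enc N b (Fin.natAdd 12 k))) := by
      simp only [← hat_inversion]
      rw [Finset.prod_mul_distrib]
      simp
    rw [prod_fin24, mul_left_comm, h2, Fintype.prod_sum, Finset.mul_sum]
    refine Finset.sum_congr rfl fun v _ => ?_
    simp only [enc_left, enc_right, Finset.prod_mul_distrib, prod_char]
    have h3 : ∑ k, -(v k * ∑ i, b i * redMat N i k) = ∑ i, b i * -∑ k, redMat N i k * v k := by
      simp only [Finset.mul_sum, mul_neg, Finset.sum_neg_distrib]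
      rw [Finset.sum_comm]
      congr 1
      refine Finset.sum_congr rfl fun i _ => Finset.sum_congr rfl fun k _ => ?_
      ring
    rw [h3]
    ring
  rw [Finset.mul_sum]
  simp only [h1]
  rw [Finset.sum_comm]
  refine Finset.sum_congr rfl fun v _ => ?_
  rw [prod_fin24, ← Finset.sum_mul]
  simp only [dual_left, dual_right]
  congr 1
  simp only [hat]
  rw [Fintype.prod_sum]

/-! ### Self-duality modulo 8 -/

theorem redMat_mul_transpose (i j : Fin 12) :
    ∑ k, redMat 8 i k * redMat 8 j k = if i = j then -1 else 0 := by
  revert i j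
  decide +kernel

/-- Since `A Aᵀ = -1`, the code `[I | A]` modulo 8 is its own dual. -/
theorem sum_dual (F : (Fin 24 → ZMod 8) → ℂ) :
    ∑ v : Fin 12 → ZMod 8, F (dual 8 v) = ∑ b : Fin 12 → ZMod 8, F (enc 8 b) := by
  have h1 : ∀ b : Fin 12 → ZMod 8, dual 8 (fun k => ∑ i, b i * redMat 8 i k) = enc 8 b := by
    intro b
    refine funext <| forall_fin24 (P := fun j => dual 8 _ j = enc 8 b j) (fun i => ?_) (fun k => ?_)
    · rw [dual_left, enc_left]
      have : ∑ k, redMat 8 i k * ∑ l, b l * redMat 8 l k =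
          ∑ l, b l * ∑ k, redMat 8 i k * redMat 8 l k := by
        simp only [Finset.mul_sum]
        rw [Finset.sum_comm]
        refine Finset.sum_congr rfl fun l _ => Finset.sum_congr rfl fun k _ => ?_
        ring
      rw [this]
      simp [redMat_mul_transpose]
    · rw [dual_right, enc_right]
  have h2 : Function.Injective fun (b : Fin 12 → ZMod 8) (k : Fin 12) =>
      ∑ i, b i * redMat 8 i k := by
    intro b b' h
    apply enc_injective 8
    rw [← h1, ← h1]
    exact congrArg _ h
  rw [← (Finite.injective_iff_bijective.1 h2).sum_comp]
  simp only [h1]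

/-- The class of an element of `ℤ/8ℤ`: its valuation, or `3` for zero. -/
def cls : ZMod 8 → Fin 4 := ![3, 0, 1, 0, 2, 0, 1, 0]

/-- The symmetrized weight enumerator of the code `[I | A]` modulo 8, evaluated at `x`. -/
def enumerator (x : Fin 4 → ℂ) : ℂ := ∑ b : Fin 12 → ZMod 8, ∏ j, x (cls (enc 8 b j))

theorem hat_cls (x : Fin 4 → ℂ) (u : ZMod 8) :
    hat (fun d => x (cls d)) u =
      (![x 3 - x 2, x 3 + x 2 - 2 * x 1, x 3 + x 2 + 2 * x 1 - 4 * x 0,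
        x 3 + x 2 + 2 * x 1 + 4 * x 0] : Fin 4 → ℂ) (cls u) := by
  have h4 : (ZMod.stdAddChar (4 : ZMod 8) : ℂ) = -1 := by
    have h1 : (ZMod.stdAddChar (4 : ZMod 8) : ℂ) ^ 2 = 1 := by
      rw [← AddChar.map_nsmul_eq_pow, show 2 • (4 : ZMod 8) = 0 by decide,
        AddChar.map_zero_eq_one]
    rcases (mul_self_eq_one_iff.1 ((sq _).symm.trans h1)) with h | h
    · exact absurd (ZMod.injective_stdAddChar (h.trans (AddChar.map_zero_eq_one _).symm)) (by decide)
    · exact h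
  -- all character values are powers of `y = χ(u)`
  have hpow : ∀ d : ZMod 8,
      (ZMod.stdAddChar (d * u) : ℂ) = (ZMod.stdAddChar u : ℂ) ^ d.val := by
    intro d
    rw [← AddChar.map_nsmul_eq_pow]
    simp
  have h9 : ∀ f : ZMod 8 → ℂ, ∑ n : ZMod 8, f n =
      f 0 + f 1 + f 2 + f 3 + f 4 + f 5 + f 6 + f 7 := fun f => Fin.sum_univ_eight f
  rw [hat, h9]
  simp only [hpow]
  change x 3 * _ ^ 0 + x 0 * _ ^ 1 + x 1 * _ ^ 2 + x 0 * _ ^ 3 + x 2 * _ ^ 4 + x 0 * _ ^ 5 +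
    x 1 * _ ^ 6 + x 0 * _ ^ 7 = _
  have hodd : 4 * u = 4 → (ZMod.stdAddChar u : ℂ) ^ 4 = -1 := by
    intro h
    rw [← h4, ← h, ← AddChar.map_nsmul_eq_pow]
    simp
  have hmid : 2 * u = 4 → (ZMod.stdAddChar u : ℂ) ^ 2 = -1 := by
    intro h
    rw [← h4, ← h, ← AddChar.map_nsmul_eq_pow]
    simp
  have hlow : u = 4 → (ZMod.stdAddChar u : ℂ) = -1 := by
    rintro rfl
    exact h4
  have hzero : u = 0 → (ZMod.stdAddChar u : ℂ) = 1 := by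
    rintro rfl
    exact AddChar.map_zero_eq_one _
  generalize (ZMod.stdAddChar u : ℂ) = y at hodd hmid hlow hzero ⊢
  have hcases : ∀ u : ZMod 8, (4 * u = 4 ∧ cls u = 0) ∨ (2 * u = 4 ∧ cls u = 1) ∨
      (u = 4 ∧ cls u = 2) ∨ (u = 0 ∧ cls u = 3) := by
    decide
  rcases hcases u with ⟨h, hc⟩ | ⟨h, hc⟩ | ⟨h, hc⟩ | ⟨h, hc⟩
  · have hy := hodd h
    rw [hc]
    change _ = x 3 - x 2
    linear_combination (x 2 + x 0 * y + x 1 * y ^ 2 + x 0 * y ^ 3) * hy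
  · have hy := hmid h
    rw [hc]
    change _ = x 3 + x 2 - 2 * x 1
    linear_combination (x 0 * y + x 1 + x 2 * (y ^ 2 - 1) + x 0 * y ^ 5 +
      x 1 * (y ^ 4 - y ^ 2 + 1)) * hy
  · rw [hc, hlow h]
    change _ = x 3 + x 2 + 2 * x 1 - 4 * x 0
    ring
  · rw [hc, hzero h]
    change _ = x 3 + x 2 + 2 * x 1 + 4 * x 0
    ring

/-- The MacWilliams identity for the self-dual code `[I | A]` modulo 8. -/
theorem macWilliams (x : Fin 4 → ℂ) :
    8 ^ 12 * enumerator x = enumerator ![x 3 - x 2, x 3 + x 2 - 2 * x 1,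
      x 3 + x 2 + 2 * x 1 - 4 * x 0, x 3 + x 2 + 2 * x 1 + 4 * x 0] := by
  have h := poisson 8 fun _ d => x (cls d)
  rw [sum_dual fun c => ∏ j, hat (fun d => x (cls d)) (c j)] at h
  simp only [hat_cls] at h
  exact_mod_cast h

/-! ### Fibres over the binary Golay code -/

/-- Reduction modulo 2. -/
def red : ZMod 8 →+* ZMod 2 := ZMod.castHom (by norm_num) (ZMod 2)

theorem map_enc {M N : ℕ} (f : ZMod M →+* ZMod N) (b : Fin 12 → ZMod M) (j : Fin 24) :
    f (enc M b j) = enc N (fun i => f (b i)) j := by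
  refine forall_fin24 (P := fun j => f (enc M b j) = enc N (fun i => f (b i)) j)
    (fun i => ?_) (fun k => ?_) j
  · rw [enc_left, enc_left]
  · rw [enc_right, enc_right]
    simp [redMat]

/-- The part of the enumerator that belongs to the codewords with reduction `s` modulo 2. -/
def fibre (x : Fin 4 → ℂ) (s : Fin 24 → ZMod 2) : ℂ :=
  ∑ n : Fin 12 → ZMod 8, if ∀ j, red (enc 8 n j) = s j then ∏ j, x (cls (enc 8 n j)) else 0

theorem enumerator_eq_sum_fibre (x : Fin 4 → ℂ) :
    enumerator x = ∑ a : Fin 12 → ZMod 2, fibre x (enc 2 a) := by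
  simp only [fibre]
  rw [Finset.sum_comm, enumerator]
  refine Finset.sum_congr rfl fun n _ => ?_
  rw [Finset.sum_eq_single fun i => red (n i)]
  · rw [if_pos fun j => map_enc red n j]
  · intro a _ ha
    rw [if_neg]
    intro h
    refine ha (enc_injective 2 (funext fun j => ?_))
    rw [← h j, map_enc]
  · simp

/-- A coordinate permutation that preserves the code modulo 8. -/
def Inv (p : Fin 24 → Fin 24) : Prop :=
  Function.Injective p ∧ ∀ n, ∃ m, enc 8 m = enc 8 n ∘ p

theorem Inv.comp {p q : Fin 24 → Fin 24} (hp : Inv p) (hq : Inv q) : Inv (p ∘ q) := by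
  refine ⟨hp.1.comp hq.1, fun n => ?_⟩
  obtain ⟨m, hm⟩ := hp.2 n
  obtain ⟨l, hl⟩ := hq.2 m
  exact ⟨l, by rw [hl, hm]; rfl⟩

theorem Inv.iterate {p : Fin 24 → Fin 24} (hp : Inv p) (k : ℕ) : Inv p^[k] := by
  induction k with
  | zero => exact ⟨Function.injective_id, fun n => ⟨n, rfl⟩⟩
  | succ k ih =>
    rw [Function.iterate_succ]
    exact ih.comp hp

theorem fibre_comp (x : Fin 4 → ℂ) (s : Fin 24 → ZMod 2) {p : Fin 24 → Fin 24} (hp : Inv p) :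
    fibre x (s ∘ p) = fibre x s := by
  obtain ⟨hinj, hm⟩ := hp
  have hbij := Finite.injective_iff_bijective.1 hinj
  choose m hm using hm
  have hmi : Function.Injective m := by
    intro n n' h
    apply enc_injective 8
    funext j
    obtain ⟨i, rfl⟩ := hbij.2 j
    have := congrFun ((hm n).symm.trans ((congrArg (enc 8) h).trans (hm n'))) i
    exact this
  rw [fibre, fibre, ← (Finite.injective_iff_bijective.1 hmi).sum_comp]
  refine Finset.sum_congr rfl fun n _ => ?_
  simp only [hm, Function.comp_apply]
  rw [hbij.prod_comp fun j => x (cls (enc 8 n j))]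
  have : (∀ j, red (enc 8 n (p j)) = s (p j)) ↔ ∀ j, red (enc 8 n j) = s j :=
    (hbij.2.forall (p := fun j => red (enc 8 n j) = s j)).symm
  simp only [this]

/-- Row `i` of the generator matrix `[I | A]` modulo 8. -/
def gen (i : Fin 12) : Fin 24 → ZMod 8 :=
  Fin.append (m := 12) (n := 12) (fun j => if i = j then 1 else 0) (redMat 8 i)

theorem enc_eq_gen (n : Fin 12 → ZMod 8) (j : Fin 24) : enc 8 n j = ∑ i, n i * gen i j := by
  refine forall_fin24 (P := fun j => enc 8 n j = ∑ i, n i * gen i j)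
    (fun i => ?_) (fun k => ?_) j
  · rw [enc_left]
    have : ∀ l, gen l (Fin.castAdd 12 i) = if l = i then 1 else 0 := fun l => Fin.append_left _ _ i
    simp [this]
  · rw [enc_right]
    have : ∀ l, gen l (Fin.natAdd 12 k) = redMat 8 l k := fun l => Fin.append_right _ _ k
    simp only [this]

theorem inv_of_gen (p : Fin 24 → Fin 24) (hp : Function.Injective p)
    (h : ∀ i k, gen i (p (Fin.natAdd 12 k)) =
      ∑ l : Fin 12, gen i (p (Fin.castAdd 12 l)) * redMat 8 l k) : Inv p := by
  refine ⟨hp, fun n => ⟨fun i => enc 8 n (p (Fin.castAdd 12 i)), ?_⟩⟩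
  refine funext <| forall_fin24 (P := fun j => enc 8 _ j = enc 8 n (p j)) (fun i => ?_) (fun k => ?_)
  · rw [enc_left]
  · rw [enc_right]
    simp only [enc_eq_gen, h, Finset.mul_sum, Finset.sum_mul]
    rw [Finset.sum_comm]
    simp only [mul_assoc]

/-- The substitution `j ↦ m j + k` on the coordinates `0, …, 22`, read modulo 23; the coordinate
at infinity is fixed. -/
def affine (m k : ℕ) (j : Fin 24) : Fin 24 :=
  if (j : ℕ) < 23 then ⟨(m * j + k) % 23, by omega⟩ else j

theorem inv_shift : Inv (affine 1 1) := by
  apply inv_of_gen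
  · decide +kernel
  · decide +kernel

theorem inv_double : Inv (affine 2 0) := by
  apply inv_of_gen
  · decide +kernel
  · decide +kernel

theorem affine_iterate_shift (k : ℕ) : (affine 1 1)^[k] = affine 1 k := by
  induction k with
  | zero =>
    funext j
    ext
    by_cases h : (j : ℕ) < 23 <;> simp [affine, h, Nat.mod_eq_of_lt]
  | succ k ih =>
    rw [Function.iterate_succ', ih]
    funext j
    ext
    by_cases h : (j : ℕ) < 23
    · simp only [Function.comp_apply, affine, h, if_true]
      rw [if_pos (Nat.mod_lt _ (by norm_num))]
      simp only
      omega
    · simp [affine, h]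

theorem affine_iterate_double (l : ℕ) : (affine 2 0)^[l] = affine (2 ^ l) 0 := by
  induction l with
  | zero =>
    funext j
    ext
    by_cases h : (j : ℕ) < 23 <;> simp [affine, h, Nat.mod_eq_of_lt]
  | succ l ih =>
    rw [Function.iterate_succ', ih]
    funext j
    ext
    by_cases h : (j : ℕ) < 23
    · simp only [Function.comp_apply, affine, h, if_true]
      rw [if_pos (Nat.mod_lt _ (by norm_num)), pow_succ', mul_assoc]
      simp only
      omega
    · simp [affine, h]

theorem inv_affine (k l : ℕ) : Inv (affine (2 ^ l) k) := by
  have h : affine (2 ^ l) k = (affine 1 1)^[k] ∘ (affine 2 0)^[l] := by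
    rw [affine_iterate_shift, affine_iterate_double]
    funext j
    ext
    by_cases h : (j : ℕ) < 23
    · simp only [Function.comp_apply, affine, h, if_true]
      rw [if_pos (Nat.mod_lt _ (by norm_num))]
      simp only
      omega
    · simp [affine, h]
  rw [h]
  exact (inv_shift.iterate k).comp (inv_double.iterate l)

/-! ### Orbits of binary Golay words -/

/-- The binary word of length 24 given by a bit mask. -/
def vec (S : ℕ) : Fin 24 → ZMod 2 := fun j => if S.testBit j then 1 else 0

/-- The element `s + 2p + 4q` of `ℤ/8ℤ`. -/
def bits (s p q : Bool) : ZMod 8 :=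
  (if s then 1 else 0) + (if p then 2 else 0) + (if q then 4 else 0)

/-- The word modulo 8 with bit planes `S`, `p₁`, `p₂`. -/
def Rep.word (r : Rep) : Fin 24 → ZMod 8 := fun j =>
  bits (r.S.testBit j) (r.p₁.testBit j) (r.p₂.testBit j)

theorem word_eq_enc : ∀ r ∈ reps, ∀ j, enc 8 (fun i => r.word (Fin.castAdd 12 i)) j = r.word j := by
  decide +kernel

theorem red_bits (s p q : Bool) : red (bits s p q) = if s then 1 else 0 := by
  cases s <;> cases p <;> cases q <;> rfl

theorem red_word (r : Rep) (j : Fin 24) : red (r.word j) = vec r.S j := red_bits _ _ _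

theorem testBit_messageBelow (S k m n : ℕ) (i : ℕ) :
    (messageBelow S k m n).testBit i = (decide (i < n) && S.testBit ((m * i + k) % 23)) := by
  have hlt : ∀ n, messageBelow S k m n < 2 ^ n := by
    intro n
    induction n with
    | zero => simp [messageBelow]
    | succ n ih =>
      have h : messageBelow S k m (n + 1) =
          messageBelow S k m n + (S.testBit ((m * n + k) % 23)).toNat <<< n := by
        rw [← testBit_toNat]
        rfl
      rw [h, Nat.shiftLeft_eq, pow_succ]
      have := Bool.toNat_le (S.testBit ((m * n + k) % 23))
      nlinarith
  induction n with
  | zero => simp [messageBelow]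
  | succ n ih =>
    have h : messageBelow S k m (n + 1) =
        messageBelow S k m n + (S.testBit ((m * n + k) % 23)).toNat <<< n := by
      rw [← testBit_toNat]
      rfl
    rw [h, add_comm, Nat.shiftLeft_add_eq_or_of_lt (hlt n), Nat.testBit_or, ih,
      Nat.testBit_shiftLeft]
    rcases lt_trichotomy i n with h1 | rfl | h1
    · have : ¬ n ≤ i := by omega
      simp [h1, this, Nat.lt_succ_of_lt h1]
    · cases S.testBit ((m * i + k) % 23) <;> simp
    · have h2 : ¬ i < n := by omega
      have h3 : ¬ i < n + 1 := by omega
      have h4 : Nat.testBit 1 (i - n) = false := by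
        rw [show i - n = (i - n - 1) + 1 by omega, Nat.testBit_succ]
        simp
      cases S.testBit ((m * n + k) % 23) <;> simp [h2, h3, h4]

/-- The message belonging to an element of the orbit list. -/
def msg (t : Rep × ℕ × ℕ) : Fin 12 → ZMod 2 := fun i => if (message t).testBit i then 1 else 0

theorem enc_msg (t : Rep × ℕ × ℕ) (ht : t.1 ∈ reps) :
    enc 2 (msg t) = vec t.1.S ∘ affine (2 ^ t.2.2) t.2.1 := by
  obtain ⟨r, k, l⟩ := t
  obtain ⟨m, hm⟩ := (inv_affine k l).2 fun i => r.word (Fin.castAdd 12 i)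
  have h : enc 2 (fun i => red (m i)) = vec r.S ∘ affine (2 ^ l) k := by
    funext j
    rw [← map_enc, hm, Function.comp_apply, word_eq_enc r ht, red_word]
    rfl
  rw [← h]
  congr 1
  funext i
  have h1 := congrFun h (Fin.castAdd 12 i)
  rw [enc_left] at h1
  rw [h1]
  have hi : ((Fin.castAdd 12 i : Fin 24) : ℕ) = i := rfl
  have hlt : (i : ℕ) < 23 := by omega
  simp only [msg, message, testBit_messageBelow, Function.comp_apply, vec, affine, hi, hlt,
    if_true, i.2, decide_true, Bool.true_and]

theorem testBit_unionOver {ι : Type} (L : List ι) (f : ι → ℕ) (i : ℕ) :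
    (unionOver L f).testBit i = true ↔ ∃ a ∈ L, (f a).testBit i = true := by
  induction L with
  | nil => simp [unionOver]
  | cons a L ih =>
    have : unionOver (a :: L) f = Nat.lor (f a) (unionOver L f) := rfl
    rw [this, testBit_natLor, Bool.or_eq_true, ih]
    simp

theorem exists_message (n : ℕ) (hn : n < 4096) : ∃ t ∈ orbitList, message t = n := by
  have h : (2 ^ 4096 - 1).testBit n = true := by
    rw [Nat.testBit_two_pow_sub_one]
    simpa using hn
  rw [← messages_cover, testBit_unionOver] at h
  obtain ⟨r, hr, h⟩ := h
  obtain ⟨k, hk, h⟩ := (testBit_unionOver _ _ _).1 h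
  obtain ⟨l, hl, h⟩ := (testBit_unionOver _ _ _).1 h
  refine ⟨(r, k, l), ?_, ?_⟩
  · simp only [orbitList, List.mem_flatMap, List.mem_map]
    exact ⟨r, hr, k, hk, l, hl, rfl⟩
  · have h' : (1 <<< message (r, k, l)).testBit n = true := h
    rw [Nat.one_shiftLeft, Nat.testBit_two_pow] at h'
    simpa using h'

theorem length_orbitList : orbitList.length = 4096 := by
  decide +kernel

theorem exists_msg (a : Fin 12 → ZMod 2) : ∃ t ∈ orbitList, msg t = a := by
  obtain ⟨t, ht, h⟩ := exists_message (Nat.ofBits fun i => decide (a i = 1)) (Nat.ofBits_lt_two_pow _)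
  refine ⟨t, ht, funext fun i => ?_⟩
  rw [msg, h, Nat.testBit_ofBits_lt _ _ i.2]
  have : ∀ z : ZMod 2, (if decide (z = 1) = true then (1 : ZMod 2) else 0) = z := by decide
  exact this (a i)

theorem sum_get {ι : Type} (L : List ι) (f : ι → ℂ) :
    ∑ i : Fin L.length, f (L.get i) = (L.map f).sum := by
  rw [← List.sum_ofFn]
  congr 1
  rw [← Function.comp_def f fun i => L.get i, ← List.map_ofFn, List.ofFn_get]

theorem sum_flatMap {ι : Type} (L : List ι) (f : ι → List ℂ) :
    (L.flatMap f).sum = (L.map fun a => (f a).sum).sum := by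
  induction L with
  | nil => rfl
  | cons a L ih => simp [ih]

/-- A sum of an invariant function over the binary Golay code, by orbits. -/
theorem sum_golay (K : (Fin 24 → ZMod 2) → ℂ) (hK : ∀ s p, Inv p → K (s ∘ p) = K s) :
    ∑ a : Fin 12 → ZMod 2, K (enc 2 a) =
      (reps.map fun r => (r.shifts * r.mults : ℂ) * K (vec r.S)).sum := by
  have hsurj : Function.Surjective fun i : Fin orbitList.length => msg (orbitList.get i) := by
    intro a
    obtain ⟨t, ht, h⟩ := exists_msg a
    obtain ⟨i, rfl⟩ := List.get_of_mem ht
    exact ⟨i, h⟩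
  have hbij := (Fintype.bijective_iff_surjective_and_card _).2 ⟨hsurj, by
    simp [length_orbitList, ZMod.card]⟩
  have hmem : ∀ t ∈ orbitList, t.1 ∈ reps := by
    intro t ht
    simp only [orbitList, List.mem_flatMap, List.mem_map] at ht
    obtain ⟨r, hr, k, _, l, _, rfl⟩ := ht
    exact hr
  rw [← hbij.sum_comp]
  have h1 : ∀ i : Fin orbitList.length, K (enc 2 (msg (orbitList.get i))) =
      K (vec (orbitList.get i).1.S) := by
    intro i
    rw [enc_msg _ (hmem _ (List.get_mem _ _)), hK _ _ (inv_affine _ _)]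
  simp only [h1]
  rw [sum_get orbitList fun t => K (vec t.1.S), orbitList]
  simp [List.map_flatMap, sum_flatMap, Function.comp_def, mul_assoc]

/-! ### The contribution of a nonzero Golay word -/

/-- The embedding of `ℤ/4ℤ` onto the ideal `2ℤ/8ℤ`. -/
def dbl (e : ZMod 4) : ZMod 8 := ((2 * e.val : ℕ) : ZMod 8)

/-- `dbl` as an additive homomorphism. -/
def dblHom : ZMod 4 →+ ZMod 8 where
  toFun := dbl
  map_zero' := by decide
  map_add' := by decide

theorem dbl_injective : Function.Injective dbl := by decide

theorem dbl_enc (b : Fin 12 → ZMod 4) (j : Fin 24) :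
    dbl (enc 4 b j) = enc 8 (fun i => dbl (b i)) j := by
  refine forall_fin24 (P := fun j => dbl (enc 4 b j) = enc 8 (fun i => dbl (b i)) j)
    (fun i => ?_) (fun k => ?_) j
  · rw [enc_left, enc_left]
  · rw [enc_right, enc_right]
    change dblHom _ = ∑ i, dblHom (b i) * _
    rw [map_sum]
    refine Finset.sum_congr rfl fun i _ => ?_
    rw [redMat, redMat, mul_comm, ← nsmul_eq_mul, map_nsmul, nsmul_eq_mul, mul_comm]

theorem enc_add (N : ℕ) (b c : Fin 12 → ZMod N) (j : Fin 24) :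
    enc N (fun i => b i + c i) j = enc N b j + enc N c j := by
  refine forall_fin24 (P := fun j => enc N (fun i => b i + c i) j = enc N b j + enc N c j)
    (fun i => ?_) (fun k => ?_) j
  · simp only [enc_left]
  · simp only [enc_right, add_mul, Finset.sum_add_distrib]

/-- The fibre over the reduction of a codeword `c` consists of the words `c + 2b`, with `b` in the
code modulo 4. -/
theorem fibre_eq (x : Fin 4 → ℂ) (n₀ : Fin 12 → ZMod 8) :
    fibre x (fun j => red (enc 8 n₀ j)) =
      ∑ b : Fin 12 → ZMod 4, ∏ j, x (cls (enc 8 n₀ j + dbl (enc 4 b j))) := by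
  have hker : ∀ d : ZMod 8, red d = 0 → ∃ e : ZMod 4, dbl e = d := by decide
  have hdbl : ∀ e : ZMod 4, red (dbl e) = 0 := by decide
  rw [fibre, ← Finset.sum_filter]
  symm
  refine Finset.sum_bij (fun b _ i => n₀ i + dbl (b i)) ?_ ?_ ?_ ?_
  · intro b _
    simp [enc_add, ← dbl_enc, hdbl]
  · intro b _ b' _ h
    funext i
    exact dbl_injective (add_left_cancel (congrFun h i))
  · intro n hn
    rw [Finset.mem_filter] at hn
    have h : ∀ i, red (n i - n₀ i) = 0 := by
      intro i
      have := hn.2 (Fin.castAdd 12 i)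
      rw [enc_left, enc_left] at this
      rw [map_sub, this, sub_self]
    choose b hb using fun i => hker _ (h i)
    exact ⟨b, Finset.mem_univ _, funext fun i => by rw [hb]; ring⟩
  · intro b _
    simp only [enc_add, ← dbl_enc]

theorem stdAddChar_one : (ZMod.stdAddChar (1 : ZMod 4) : ℂ) = Complex.I := by
  have h := ZMod.stdAddChar_coe (N := 4) 1
  rw [Int.cast_one] at h
  rw [h, show (2 * Real.pi * Complex.I * ((1 : ℤ) : ℂ) / ((4 : ℕ) : ℂ)) =
    (Real.pi / 2 * Complex.I : ℂ) by push_cast; ring, Complex.exp_pi_div_two_mul_I]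

/-- The Fourier transform of one coordinate of the fibre over a Golay word, at the element
`u₁ + 2u₂` of `ℤ/4ℤ`. -/
theorem hat_coord (x : Fin 4 → ℂ) (s p q u₁ u₂ : Bool) :
    hat (fun d => x (cls (bits s p q + dbl d)))
        ((if u₁ then 1 else 0) + (if u₂ then 2 else 0) : ZMod 4) =
      if s && (u₁ || u₂) then 0
      else (4 * x 0) ^ s.toNat * ((x 3 + x 2 + 2 * x 1) ^ (true ^^ (s || (u₁ || u₂))).toNat *
        (x 3 + x 2 - 2 * x 1) ^ (u₂ ^^ (u₁ && u₂)).toNat * (x 3 - x 2) ^ u₁.toNat *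
        (Complex.I ^ (u₁ && p).toNat *
          (Complex.I ^ 2) ^ (u₁ && (p ^^ q)).toNat * (Complex.I ^ 2) ^ (u₂ && p).toNat)) := by
  have hchar : ∀ u d : ZMod 4, (ZMod.stdAddChar (d * u) : ℂ) = (Complex.I ^ u.val) ^ d.val := by
    intro u d
    rw [← stdAddChar_one, ← AddChar.map_nsmul_eq_pow, ← AddChar.map_nsmul_eq_pow]
    simp
  have h4 : ∀ f : ZMod 4 → ℂ, ∑ n : ZMod 4, f n = f 0 + f 1 + f 2 + f 3 := fun f =>
    Fin.sum_univ_four f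
  have hx : ∀ c : ZMod 8, hat (fun d => x (cls (c + dbl d)))
      ((if u₁ then 1 else 0) + (if u₂ then 2 else 0) : ZMod 4) =
        x (cls (c + dbl 0)) + x (cls (c + dbl 1)) * Complex.I ^ (u₁.toNat + 2 * u₂.toNat) +
        x (cls (c + dbl 2)) * (Complex.I ^ (u₁.toNat + 2 * u₂.toNat)) ^ 2 +
        x (cls (c + dbl 3)) * (Complex.I ^ (u₁.toNat + 2 * u₂.toNat)) ^ 3 := by
    intro c
    have hu : ((if u₁ then 1 else 0) + (if u₂ then 2 else 0) : ZMod 4).val =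
        u₁.toNat + 2 * u₂.toNat := by
      cases u₁ <;> cases u₂ <;> rfl
    rw [hat, h4]
    simp only [hchar, hu]
    change _ * _ ^ 0 + _ * _ ^ 1 + _ * _ ^ 2 + _ * _ ^ 3 = _
    rw [pow_zero, pow_one, mul_one]
  have hI3 : Complex.I ^ 3 = -Complex.I := Complex.I_pow_three
  have hI2 := Complex.I_sq
  rw [hx]
  cases s
  · cases p <;> cases q
    · change x 3 + x 1 * _ + x 2 * _ + x 1 * _ = _
      cases u₁ <;> cases u₂ <;> simp <;> grind
    · change x 2 + x 1 * _ + x 3 * _ + x 1 * _ = _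
      cases u₁ <;> cases u₂ <;> simp <;> grind
    · change x 1 + x 2 * _ + x 1 * _ + x 3 * _ = _
      cases u₁ <;> cases u₂ <;> simp <;> grind
    · change x 1 + x 3 * _ + x 1 * _ + x 2 * _ = _
      cases u₁ <;> cases u₂ <;> simp <;> grind
  · have hc : ∀ p q : Bool, ∀ e : ZMod 4, cls (bits true p q + dbl e) = 0 := by decide
    simp only [hc]
    cases u₁ <;> cases u₂ <;> simp <;> grind

/-- The summand of the transformed fibre sum over a Golay word. -/
def summand (x : Fin 4 → ℂ) (r : Rep) (u : Fin 24 → ZMod 4) : ℂ :=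
  ∏ j, hat (fun d => x (cls (r.word j + dbl d))) (u j)

theorem summand_eq_zero (x : Fin 4 → ℂ) (r : Rep) (j : Fin 24) (hj : r.S.testBit j = true)
    (u : Fin 24 → ZMod 4) (hu : u j ≠ 0) : summand x r u = 0 := by
  refine Finset.prod_eq_zero (Finset.mem_univ j) ?_
  have h : ∀ z : ZMod 4, z ≠ 0 → ∃ a b : Bool, (a || b) = true ∧
      z = (if a then 1 else 0) + (if b then 2 else 0) := by decide
  obtain ⟨a, b, hab, hz⟩ := h _ hu
  rw [hz, Rep.word, hat_coord, hj, hab]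
  simp

theorem testBit_full (j : Fin 24) : (16777215).testBit j = true := by
  revert j
  decide

theorem summand_unpack (x : Fin 4 → ℂ) (r : Rep) (u : Packed) (hu : dead r.S u = 0) :
    summand x r (unpack u) = (4 * x 0) ^ pop r.S *
      keyVal (x 3 + x 2 + 2 * x 1) (x 3 + x 2 - 2 * x 1) (x 3 - x 2)
        (leafKey r.S r.p₁ (r.p₁ ^^^ r.p₂) u) := by
  have hI : ∀ a b c : ℕ, Complex.I ^ Nat.mod (Nat.add a (Nat.mul 2 (Nat.add b c))) 4 =
      Complex.I ^ a * (Complex.I ^ 2) ^ b * (Complex.I ^ 2) ^ c := by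
    intro a b c
    change Complex.I ^ ((a + 2 * (b + c)) % 4) = _
    rw [← Complex.I_pow_eq_pow_mod]
    ring
  simp only [keyVal, leafKey, hI, pow_pop, ← Finset.prod_mul_distrib, testBit_natXor,
    testBit_natLand, testBit_natLor, Nat.testBit_xor, testBit_full]
  refine Finset.prod_congr rfl fun j _ => ?_
  have hd : (r.S.testBit j && (u.1.testBit j || u.2.testBit j)) = false := by
    have := congrArg (fun n => n.testBit j) hu
    simp only [dead, testBit_natLand, testBit_natLor, Nat.zero_testBit] at this
    rw [Bool.and_comm]
    exact this
  rw [unpack, Rep.word, hat_coord, hd]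
  simp only [Bool.false_eq_true, if_false]

theorem dead_ne_zero (x : Fin 4 → ℂ) (r : Rep) (hr : r.S < 2 ^ 24) (u : Packed)
    (hu : dead r.S u ≠ 0) : summand x r (unpack u) = 0 := by
  obtain ⟨i, hi⟩ := Nat.exists_testBit_of_ne_zero hu
  rw [dead, testBit_natLand, testBit_natLor, Bool.and_eq_true] at hi
  have hlt : i < 24 := by
    by_contra h
    have : r.S.testBit i = false :=
      Nat.testBit_lt_two_pow (hr.trans_le (Nat.pow_le_pow_right (by norm_num) (by omega)))
    rw [this] at hi
    exact absurd hi.2 (by simp)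
  refine summand_eq_zero x r ⟨i, hlt⟩ hi.2 _ ?_
  simp only [unpack]
  revert hi
  generalize u.1.testBit i = a
  generalize u.2.testBit i = b
  intro h
  have h' := h.1
  clear h
  revert a b
  decide

theorem dual_eq (v : Fin 12 → ZMod 4) :
    dual 4 v = 0 + ∑ k, v k • unpack (dualRows.getD k (0, 0)) := by
  have h1 : ∀ i k : Fin 12, unpack (dualRows.getD k (0, 0)) (Fin.castAdd 12 i) = -redMat 4 i k := by
    decide +kernel
  have h2 : ∀ i k : Fin 12, unpack (dualRows.getD k (0, 0)) (Fin.natAdd 12 i) =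
      if i = k then 1 else 0 := by
    decide +kernel
  refine funext <| forall_fin24
    (P := fun j => dual 4 v j = (0 + ∑ k, v k • unpack (dualRows.getD k (0, 0))) j)
    (fun i => ?_) (fun i => ?_)
  · rw [dual_left, Pi.add_apply, Finset.sum_apply]
    simp only [Pi.smul_apply, h1, Pi.zero_apply, zero_add, smul_eq_mul, mul_neg,
      Finset.sum_neg_distrib, mul_comm]
  · rw [dual_right, Pi.add_apply, Finset.sum_apply]
    simp only [Pi.smul_apply, h2, Pi.zero_apply, zero_add, smul_eq_mul, mul_ite, mul_one, mul_zero,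
      Finset.sum_ite_eq, Finset.mem_univ, if_true]

theorem nonzeroReps_lt : ∀ r ∈ nonzeroReps, r.S < 2 ^ 24 := by decide

theorem tableVal_zero (α β w : ℂ) (T : List (Key × ℕ)) :
    tableVal α β w (T.map fun e => (e.1, 0)) = 0 := by
  simp [tableVal, Function.comp_def]

theorem fibre_nonzero (x : Fin 4 → ℂ) (r : Rep) (hr : r ∈ nonzeroReps) :
    4 ^ 12 * fibre x (vec r.S) = (4 * x 0) ^ pop r.S *
      tableVal (x 3 + x 2 + 2 * x 1) (x 3 + x 2 - 2 * x 1) (x 3 - x 2)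
        (expectedTable (pop r.S)) := by
  have hr' : r ∈ reps := List.mem_cons_of_mem _ hr
  have h1 : fibre x (vec r.S) = ∑ b : Fin 12 → ZMod 4,
      ∏ j, (fun j d => x (cls (r.word j + dbl d))) j (enc 4 b j) := by
    rw [← funext (red_word r)]
    have := fibre_eq x fun i => r.word (Fin.castAdd 12 i)
    simp only [word_eq_enc r hr'] at this
    exact this
  have h2 := poisson 4 fun j d => x (cls (r.word j + dbl d))
  rw [← h1] at h2
  have h3 : List.ofFn (fun k : Fin 12 => unpack (dualRows.getD k (0, 0))) = dualRows.map unpack := by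
    simp [dualRows, List.ofFn_succ]
  have h4 : ∑ v : Fin 12 → ZMod 4, summand x r (dual 4 v) =
      spanSum (summand x r) (dualRows.map unpack) 0 := by
    rw [← h3, ← sum_fun_eq_spanSum]
    simp only [dual_eq]
  have h5 := tableVal_collect (summand x r) r.S r.p₁ (r.p₁ ^^^ r.p₂) _ _ _ _
    (dead_ne_zero x r (nonzeroReps_lt r hr)) (summand_unpack x r) (elim r.S dualRows 24) (0, 0)
    ((expectedTable (pop r.S)).map fun e => (e.1, 0))
  have h6 : unpack (0, 0) = 0 := by
    funext j
    simp [unpack]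
  rw [h6, spanSum_elim _ _ _ (summand_eq_zero x r) 24 le_rfl, tableVal_zero, mul_zero, add_zero,
    ← h4] at h5
  rw [← foundTable_eq r hr, foundTable, h5]
  exact_mod_cast h2

/-- The contribution of the nonzero Golay words, multiplied by `4 ^ 12`: 759 octads, 2576 dodecads,
759 complements of octads and the all-one word, in terms of `y = 4 x₀`, `α = z + x₂ + 2 x₁`,
`β = z + x₂ - 2 x₁` and `w = z - x₂`. -/
def nonzeroPart (y α β w : ℂ) : ℂ :=
  759 * y ^ 8 * (α ^ 16 - 2 * α ^ 8 * β ^ 8 + β ^ 16 +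
    w ^ 8 * (-16 * α ^ 6 * β ^ 2 + 32 * α ^ 4 * β ^ 4 - 16 * α ^ 2 * β ^ 6)) +
  2576 * y ^ 12 * (α ^ 12 - β ^ 12) + 759 * y ^ 16 * (α ^ 8 + β ^ 8) + y ^ 24

theorem enumerator_eq (x : Fin 4 → ℂ) :
    4 ^ 12 * enumerator x = 4 ^ 12 * fibre x 0 + nonzeroPart (4 * x 0) (x 3 + x 2 + 2 * x 1)
      (x 3 + x 2 - 2 * x 1) (x 3 - x 2) := by
  rw [enumerator_eq_sum_fibre, sum_golay _ fun s p hp => fibre_comp x s hp, reps, List.map_cons,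
    List.sum_cons]
  have h0 : vec 0 = 0 := by
    funext j
    simp [vec]
  have h1 : 4 ^ 12 * (nonzeroReps.map fun r => (r.shifts * r.mults : ℂ) * fibre x (vec r.S)).sum =
      (nonzeroReps.map fun r => (r.shifts * r.mults : ℂ) * ((4 * x 0) ^ pop r.S *
      tableVal (x 3 + x 2 + 2 * x 1) (x 3 + x 2 - 2 * x 1) (x 3 - x 2)
        (expectedTable (pop r.S)))).sum := by
    rw [← List.sum_map_mul_left]
    congr 1
    refine List.map_congr_left fun r hr => ?_
    rw [mul_left_comm, fibre_nonzero x r hr]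
  rw [mul_add, h1, h0]
  generalize x 3 + x 2 + 2 * x 1 = α
  generalize x 3 + x 2 - 2 * x 1 = β
  generalize x 3 - x 2 = w
  generalize 4 * x 0 = y
  have h2 : (nonzeroReps.map fun r => (r.shifts, r.mults, pop r.S)) =
      List.replicate 3 (23, 11, 8) ++ (List.replicate 5 (23, 11, 12) ++ ([(23, 1, 12)] ++
        (List.replicate 5 (23, 11, 12) ++ ([(23, 1, 12)] ++ (List.replicate 3 (23, 11, 16) ++
          [(1, 1, 24)]))))) := by decide +kernel
  have h3 : (nonzeroReps.map fun r => (r.shifts * r.mults : ℂ) * (y ^ pop r.S *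
      tableVal α β w (expectedTable (pop r.S)))) =
      (nonzeroReps.map fun r => (r.shifts, r.mults, pop r.S)).map fun t : ℕ × ℕ × ℕ =>
        (t.1 * t.2.1 : ℂ) * (y ^ t.2.2 * tableVal α β w (expectedTable t.2.2)) := by
    rw [List.map_map]
    rfl
  rw [h3, h2]
  simp only [List.map_append, List.sum_append, List.map_replicate, List.sum_replicate, List.map_cons,
    List.map_nil, List.sum_cons, List.sum_nil, tableVal, expectedTable, keyVal, nonzeroPart]
  norm_num
  ring

/-! ### The contribution of the zero word and the final formula -/

/-- Over the zero word no coordinate is a unit, so the value of `x 0` is irrelevant. -/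
theorem fibre_zero_congr (x y : Fin 4 → ℂ) (h : ∀ i, i ≠ 0 → x i = y i) :
    fibre x 0 = fibre y 0 := by
  have hc : ∀ d : ZMod 8, red d = 0 → cls d ≠ 0 := by decide
  refine Finset.sum_congr rfl fun n _ => ?_
  split_ifs with hn
  · exact Finset.prod_congr rfl fun j _ => h _ (hc _ (hn j))
  · rfl

/-- The Hamming weight enumerator of the binary Golay code. -/
theorem golay_enumerator (a b : ℂ) :
    ∑ m : Fin 12 → ZMod 2, ∏ j, (if enc 2 m j = 0 then a else b) =
      a ^ 24 + 759 * a ^ 16 * b ^ 8 + 2576 * a ^ 12 * b ^ 12 + 759 * a ^ 8 * b ^ 16 + b ^ 24 := by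
  rw [sum_golay fun s => ∏ j, if s j = 0 then a else b]
  · have h1 : ∀ S, ∏ j, (if vec S j = 0 then a else b) =
        a ^ pop (Nat.xor 16777215 S) * b ^ pop S := by
      intro S
      rw [pow_pop, pow_pop, ← Finset.prod_mul_distrib]
      refine Finset.prod_congr rfl fun j _ => ?_
      rw [testBit_natXor, testBit_full, vec]
      cases S.testBit j <;> simp
    simp only [h1]
    have h2 : (reps.map fun r => (r.shifts, r.mults, pop (Nat.xor 16777215 r.S), pop r.S)) =
        [(1, 1, 24, 0)] ++ (List.replicate 3 (23, 11, 16, 8) ++ (List.replicate 5 (23, 11, 12, 12) ++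
          ([(23, 1, 12, 12)] ++ (List.replicate 5 (23, 11, 12, 12) ++ ([(23, 1, 12, 12)] ++
            (List.replicate 3 (23, 11, 8, 16) ++ [(1, 1, 0, 24)])))))) := by decide +kernel
    have h3 : (reps.map fun r => (r.shifts * r.mults : ℂ) *
        (a ^ pop (Nat.xor 16777215 r.S) * b ^ pop r.S)) =
        (reps.map fun r => (r.shifts, r.mults, pop (Nat.xor 16777215 r.S), pop r.S)).map
          fun t : ℕ × ℕ × ℕ × ℕ => (t.1 * t.2.1 : ℂ) * (a ^ t.2.2.1 * b ^ t.2.2.2) := by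
      rw [List.map_map]
      rfl
    rw [h3, h2]
    simp only [List.map_append, List.sum_append, List.map_replicate, List.sum_replicate,
      List.map_cons, List.map_nil, List.sum_cons, List.sum_nil]
    norm_num
    ring
  · intro s p hp
    exact (Finite.injective_iff_bijective.1 hp.1).prod_comp fun j => if s j = 0 then a else b

/-- When `x 2 = x 3`, the codewords in `2 (ℤ/8ℤ)^24` are only seen through their halves modulo 2. -/
theorem fibre_zero_eq (x : Fin 4 → ℂ) (h : x 2 = x 3) :
    fibre x 0 = 2 ^ 12 * (x 3 ^ 24 + 759 * x 3 ^ 16 * x 1 ^ 8 + 2576 * x 3 ^ 12 * x 1 ^ 12 +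
      759 * x 3 ^ 8 * x 1 ^ 16 + x 1 ^ 24) := by
  let f : ZMod 4 →+* ZMod 2 := ZMod.castHom (by norm_num) (ZMod 2)
  have h8 : ∀ j, enc 8 0 j = 0 := by
    intro j
    refine forall_fin24 (P := fun j => enc 8 0 j = 0) (fun i => ?_) (fun k => ?_) j
    · rw [enc_left]; simp
    · rw [enc_right]; simp
  have h0 : (0 : Fin 24 → ZMod 2) = fun j => red (enc 8 0 j) := by
    funext j
    rw [h8, map_zero]
    rfl
  have hf : ∀ e : ZMod 4, x (cls (0 + dbl e)) = if f e = 0 then x 3 else x 1 := by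
    have hc : ∀ e : ZMod 4, (f e = 0 ∧ (cls (0 + dbl e) = 2 ∨ cls (0 + dbl e) = 3)) ∨
        (f e ≠ 0 ∧ cls (0 + dbl e) = 1) := by decide
    intro e
    rcases hc e with ⟨h1, h2 | h2⟩ | ⟨h1, h2⟩
    · rw [h2, if_pos h1, h]
    · rw [h2, if_pos h1]
    · rw [h2, if_neg h1]
  rw [h0, fibre_eq]
  simp only [h8, hf, map_enc]
  -- each binary message has `2 ^ 12` preimages modulo 4
  have hg : Function.Bijective fun e : ZMod 4 => (f e, (if e.val < 2 then 0 else 1 : ZMod 2)) := by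
    decide
  let E : (Fin 12 → ZMod 4) ≃ (Fin 12 → ZMod 2) × (Fin 12 → ZMod 2) :=
    ((Equiv.refl _).arrowCongr (Equiv.ofBijective _ hg)).trans (Equiv.arrowProdEquivProdArrow _ _ _)
  rw [← golay_enumerator, ← Equiv.sum_comp E.symm, Fintype.sum_prod_type]
  have hE : ∀ p : (Fin 12 → ZMod 2) × (Fin 12 → ZMod 2), (fun i => f (E.symm p i)) = p.1 := by
    intro p
    have : ∀ b, (fun i => f (b i)) = (E b).1 := fun b => rfl
    rw [this, Equiv.apply_symm_apply]
  simp only [hE]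
  norm_num [Finset.mul_sum]

/-- The enumerator in closed form; `t = z + x₂`, `v = 2 x₁` and `w = z - x₂`. -/
theorem enumerator_formula (x : Fin 4 → ℂ) (t v w : ℂ) (ht : x 3 + x 2 = t) (hv : 2 * x 1 = v)
    (hw : x 3 - x 2 = w) :
    8 ^ 12 * 4 ^ 12 * enumerator x =
      4 ^ 12 * 2 ^ 12 * ((t + v) ^ 24 + 759 * (t + v) ^ 16 * (t - v) ^ 8 +
        2576 * (t + v) ^ 12 * (t - v) ^ 12 + 759 * (t + v) ^ 8 * (t - v) ^ 16 + (t - v) ^ 24) +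
      nonzeroPart (4 * w) (4 * t) (4 * v) 0 + 8 ^ 12 * nonzeroPart (4 * x 0) (t + v) (t - v) w := by
  have hzero := enumerator_eq ![0, x 1, x 2, x 3]
  have hdual := enumerator_eq ![w, t - v, t + v, t + v]
  have hmac := macWilliams ![0, x 1, x 2, x 3]
  have hx := enumerator_eq x
  have hfib : fibre ![0, x 1, x 2, x 3] 0 = fibre x 0 := by
    refine fibre_zero_congr _ _ fun i hi => ?_
    fin_cases i
    · exact absurd rfl hi
    all_goals rfl
  have hfib' := fibre_zero_eq ![w, t - v, t + v, t + v] rfl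
  rw [hfib'] at hdual
  rw [hfib] at hzero
  simp only [Matrix.cons_val] at hzero hdual hmac hx
  rw [ht, hv, hw] at hzero hmac hx
  rw [show t + v - 4 * 0 = t + v by ring, show t + v + 4 * 0 = t + v by ring] at hmac
  have hn : nonzeroPart (4 * 0) (t + v) (t - v) w = 0 := by
    simp [nonzeroPart]
  rw [show t + v + (t + v) + 2 * (t - v) = 4 * t by ring,
    show t + v + (t + v) - 2 * (t - v) = 4 * v by ring, sub_self] at hdual
  rw [hn] at hzero
  linear_combination 8 ^ 12 * hx - 8 ^ 12 * hzero + 4 ^ 12 * hmac + hdual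

/-! ### The two Hensel lifts and their codes -/

/-- The polynomial of degree at most 11 over `ℤ/8ℤ` with the given coefficients, lowest first. -/
def ofCoeffs (L : List ℕ) : Polynomial (ZMod 8) :=
  ∑ i ∈ Finset.range 12, Polynomial.C ((L.getD i 0 : ℕ) : ZMod 8) * Polynomial.X ^ i

/-- The coefficients of the first degree-11 factor of `x^23 - 1` modulo 8. -/
def coeffs₁ : List ℕ := [7, 1, 4, 4, 2, 7, 3, 3, 4, 7, 2, 1]

/-- The coefficients of the second degree-11 factor of `x^23 - 1` modulo 8. -/
def coeffs₂ : List ℕ := [7, 6, 1, 4, 5, 5, 1, 6, 4, 4, 7, 1]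

theorem coeff_ofCoeffs (L : List ℕ) (n : ℕ) :
    (ofCoeffs L).coeff n = if n < 12 then ((L.getD n 0 : ℕ) : ZMod 8) else 0 := by
  simp [ofCoeffs, Polynomial.finsetSum_coeff, Polynomial.coeff_X_pow]

theorem natDegree_ofCoeffs (L : List ℕ) (h : L.getD 11 0 = 1) : (ofCoeffs L).natDegree = 11 := by
  refine Polynomial.natDegree_eq_of_le_of_coeff_ne_zero ?_ ?_
  · rw [Polynomial.natDegree_le_iff_coeff_eq_zero]
    intro n hn
    rw [coeff_ofCoeffs, if_neg (by omega)]
  · rw [coeff_ofCoeffs, h]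
    decide

theorem monic_ofCoeffs (L : List ℕ) (h : L.getD 11 0 = 1) : (ofCoeffs L).Monic := by
  rw [Polynomial.Monic, Polynomial.leadingCoeff, natDegree_ofCoeffs L h, coeff_ofCoeffs, h]
  simp

theorem factorization :
    (Polynomial.X - 1) * ofCoeffs coeffs₁ * ofCoeffs coeffs₂ =
      (Polynomial.X ^ 23 - 1 : Polynomial (ZMod 8)) := by
  have h8 : (8 : Polynomial (ZMod 8)) = 0 := by
    have : ((8 : ZMod 8)) = 0 := by decide
    calc (8 : Polynomial (ZMod 8)) = Polynomial.C (8 : ZMod 8) := (Polynomial.C_ofNat 8).symm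
      _ = 0 := by rw [this, Polynomial.C_0]
  simp only [ofCoeffs, coeffs₁, coeffs₂, Finset.sum_range_succ, Finset.sum_range_zero,
    List.getD_cons_zero, List.getD_cons_succ, Nat.cast_ofNat, Nat.cast_one, Polynomial.C_ofNat,
    Polynomial.C_1]
  generalize (Polynomial.X : Polynomial (ZMod 8)) = y
  -- the difference of the two sides over `ℤ`, divided by 8
  linear_combination (-6 + y ^ 2 - 5 * y ^ 3 - 5 * y ^ 5 + y ^ 6 - 3 * y ^ 7 - y ^ 8 - 6 * y ^ 9 -
    3 * y ^ 10 + 10 * y ^ 11 - 4 * y ^ 12 + 2 * y ^ 13 + 3 * y ^ 14 + y ^ 15 + 2 * y ^ 16 +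
    3 * y ^ 17 + y ^ 18 + y ^ 19 + 5 * y ^ 20 + 2 * y ^ 21 + y ^ 22) * h8

/-- Complementary factors of `x^23 - 1` modulo 8 are coprime: with `P = x^23 - 1` one has
`x P' - 23 P = 23`, a unit. -/
theorem isCoprime_of_mul_eq (G H : Polynomial (ZMod 8)) (h : G * H = Polynomial.X ^ 23 - 1) :
    IsCoprime G H := by
  have hd := congrArg Polynomial.derivative h
  simp only [Polynomial.derivative_mul, Polynomial.derivative_sub, Polynomial.derivative_X_pow,
    Polynomial.derivative_one, sub_zero] at hd
  have h8 : (8 : Polynomial (ZMod 8)) = 0 := by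
    have : ((8 : ZMod 8)) = 0 := by decide
    calc (8 : Polynomial (ZMod 8)) = Polynomial.C (8 : ZMod 8) := (Polynomial.C_ofNat 8).symm
      _ = 0 := by rw [this, Polynomial.C_0]
  have hc : (Polynomial.C ((23 : ℕ) : ZMod 8)) = 23 := Polynomial.C_ofNat 23
  rw [hc] at hd
  refine ⟨7 * (Polynomial.X * Polynomial.derivative H - 23 * H),
    7 * (Polynomial.X * Polynomial.derivative G), ?_⟩
  linear_combination 7 * Polynomial.X * hd - 161 * h + 20 * h8

/-- Uniqueness of the Hensel lift. -/
theorem lift_unique (G H g : Polynomial (ZMod 8)) (h : G * H = Polynomial.X ^ 23 - 1)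
    (hG : G.Monic) (hg : g.Monic) (hdeg : G.natDegree = g.natDegree)
    (hdvd : g ∣ Polynomial.X ^ 23 - 1) (hmap : g.map red = G.map red) : g = G := by
  obtain ⟨a, b, hab⟩ := isCoprime_of_mul_eq G H h
  have hnil : IsNilpotent (a * g + b * H - 1) := by
    rw [Polynomial.isNilpotent_iff]
    intro i
    have hz : (a * g + b * H - 1).map red = 0 := by
      have := congrArg (Polynomial.map red) hab
      simp only [Polynomial.map_add, Polynomial.map_mul, Polynomial.map_one] at this
      simp only [Polynomial.map_sub, Polynomial.map_add, Polynomial.map_mul, Polynomial.map_one,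
        hmap, this, sub_self]
    have hz' := congrArg (fun p => Polynomial.coeff p i) hz
    simp only [Polynomial.coeff_map, Polynomial.coeff_zero] at hz'
    have : ∀ d : ZMod 8, red d = 0 → d ^ 3 = 0 := by decide
    exact ⟨3, this _ hz'⟩
  have hunit := hnil.isUnit_one_add
  rw [add_sub_cancel] at hunit
  obtain ⟨e, he⟩ := hunit.exists_left_inv
  have hcop : IsCoprime g H := ⟨e * a, e * b, by rw [← he]; ring⟩
  have hgG : g ∣ G := hcop.dvd_of_dvd_mul_right (h ▸ hdvd)
  exact (Polynomial.eq_of_monic_of_dvd_of_natDegree_le hg hG hgG hdeg.le).symm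

theorem factorization₁ : ofCoeffs coeffs₁ * ((Polynomial.X - 1) * ofCoeffs coeffs₂) =
    (Polynomial.X ^ 23 - 1 : Polynomial (ZMod 8)) := by
  rw [← factorization]
  ring

theorem factorization₂ : ofCoeffs coeffs₂ * ((Polynomial.X - 1) * ofCoeffs coeffs₁) =
    (Polynomial.X ^ 23 - 1 : Polynomial (ZMod 8)) := by
  rw [← factorization]
  ring

theorem lift_eq (g : Polynomial (ZMod 2)) (hg : IsQRFactor 2 g) (g3 : Polynomial (ZMod 8))
    (hmonic : g3.Monic) (hdeg : g3.natDegree = 11) (hdvd : g3 ∣ Polynomial.X ^ 23 - 1)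
    (hmap : g3.map red = g) : g3 = ofCoeffs coeffs₁ ∨ g3 = ofCoeffs coeffs₂ := by
  obtain ⟨gm, gd, gi, gdvd⟩ := hg
  have : Fact (Nat.Prime 2) := ⟨Nat.prime_two⟩
  have h := congrArg (Polynomial.map red) factorization
  simp only [Polynomial.map_mul, Polynomial.map_sub, Polynomial.map_pow, Polynomial.map_X,
    Polynomial.map_one] at h
  have key : ∀ L : List ℕ, L.getD 11 0 = 1 → g ∣ (ofCoeffs L).map red →
      (ofCoeffs L).map red = g := by
    intro L hL hd
    refine Polynomial.eq_of_monic_of_dvd_of_natDegree_le gm ((monic_ofCoeffs L hL).map red) hd ?_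
    rw [gd, ← natDegree_ofCoeffs L hL]
    exact Polynomial.natDegree_map_le
  rw [← h] at gdvd
  rcases gi.prime.dvd_or_dvd gdvd with h1 | h1
  · rcases gi.prime.dvd_or_dvd h1 with h2 | h2
    · have h3 := Polynomial.natDegree_le_of_dvd h2 (Polynomial.X_sub_C_ne_zero 1)
      have h4 : (Polynomial.X - 1 : Polynomial (ZMod 2)).natDegree = 1 :=
        Polynomial.natDegree_X_sub_C 1
      omega
    · exact Or.inl (lift_unique _ _ _ factorization₁ (monic_ofCoeffs _ rfl) hmonic
        ((natDegree_ofCoeffs _ rfl).trans hdeg.symm) hdvd (hmap.trans (key _ rfl h2).symm))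
  · exact Or.inr (lift_unique _ _ _ factorization₂ (monic_ofCoeffs _ rfl) hmonic
        ((natDegree_ofCoeffs _ rfl).trans hdeg.symm) hdvd (hmap.trans (key _ rfl h1).symm))

/-- The words of the cyclic code generated by `G` are the multiples `q G` with `deg q < 12`. -/
theorem cyclic_iff (G H : Polynomial (ZMod 8)) (h : G * H = Polynomial.X ^ 23 - 1) (hG : G.Monic)
    (hdeg : G.natDegree = 11) (c : Fin 23 → ZMod 8) :
    (∃ f : Polynomial (ZMod 8), ∀ j : Fin 23,
      c j = ((f * G) %ₘ (Polynomial.X ^ 23 - 1)).coeff (j : ℕ)) ↔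
    ∃ q : Fin 12 → ZMod 8, ∀ j : Fin 23,
      c j = ∑ k : Fin 12, q k * if (k : ℕ) ≤ j then G.coeff (j - k) else 0 := by
  have : Nontrivial (ZMod 8) := ⟨0, 1, by decide⟩
  have hM : (Polynomial.X ^ 23 - 1 : Polynomial (ZMod 8)).Monic :=
    Polynomial.monic_X_pow_sub_C 1 (by norm_num)
  have hMd : (Polynomial.X ^ 23 - 1 : Polynomial (ZMod 8)).natDegree = 23 :=
    Polynomial.natDegree_X_pow_sub_C
  have hH : H.Monic := hG.of_mul_monic_left (h ▸ hM)
  have hHd : H.natDegree = 12 := by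
    have := hG.natDegree_mul hH
    rw [h, hMd, hdeg] at this
    omega
  have hcoeff : ∀ q : Polynomial (ZMod 8), q.natDegree < 12 → ∀ j : Fin 23,
      ((q * G) %ₘ (Polynomial.X ^ 23 - 1)).coeff (j : ℕ) =
        ∑ k : Fin 12, q.coeff k * if (k : ℕ) ≤ j then G.coeff (j - k) else 0 := by
    intro q hq j
    rw [(Polynomial.modByMonic_eq_self_iff hM).2]
    · rw [Fin.sum_univ_eq_sum_range
        (fun k => q.coeff k * if k ≤ (j : ℕ) then G.coeff (j - k) else 0) 12, Polynomial.coeff_mul,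
        Finset.Nat.sum_antidiagonal_eq_sum_range_succ fun a b => q.coeff a * G.coeff b]
      have h1 : ∑ k ∈ Finset.range (j + 1), q.coeff k * G.coeff (j - k) =
          ∑ k ∈ Finset.range (j + 1), q.coeff k * if k ≤ (j : ℕ) then G.coeff (j - k) else 0 := by
        refine Finset.sum_congr rfl fun k hk => ?_
        rw [if_pos (Nat.lt_succ_iff.1 (Finset.mem_range.1 hk))]
      have h2 : ∀ n, n ≤ 24 → (∀ k, n ≤ k → q.coeff k *
          (if k ≤ (j : ℕ) then G.coeff (j - k) else 0) = 0) →
          ∑ k ∈ Finset.range n, q.coeff k * (if k ≤ (j : ℕ) then G.coeff (j - k) else 0) =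
          ∑ k ∈ Finset.range 24, q.coeff k * (if k ≤ (j : ℕ) then G.coeff (j - k) else 0) := by
        intro n hn hz
        refine Finset.sum_subset (Finset.range_mono hn) fun k _ hk => hz k ?_
        simpa using hk
      rw [h1, h2 (j + 1) (by omega), h2 12 (by norm_num)]
      · intro k hk
        rw [Polynomial.coeff_eq_zero_of_natDegree_lt (by omega), zero_mul]
      · intro k hk
        rw [if_neg (by omega), mul_zero]
    · apply Polynomial.degree_lt_degree
      rw [hMd]
      have := Polynomial.natDegree_mul_le (p := q) (q := G)
      omega
  constructor
  · rintro ⟨f, hf⟩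
    refine ⟨fun k => (f %ₘ H).coeff k, fun j => ?_⟩
    have hlt : (f %ₘ H).natDegree < 12 := by
      rw [← hHd]
      exact Polynomial.natDegree_modByMonic_lt _ hH (by
        rintro rfl
        simp at hHd)
    rw [hf, ← hcoeff _ hlt]
    congr 1
    have h1 : f * G = (f %ₘ H) * G + (Polynomial.X ^ 23 - 1) * (f /ₘ H) := by
      conv_lhs => rw [← Polynomial.modByMonic_add_div f H]
      rw [← h]
      ring
    rw [h1, Polynomial.add_modByMonic, (Polynomial.modByMonic_eq_zero_iff_dvd hM).2 (dvd_mul_right _ _),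
      add_zero]
  · rintro ⟨q, hq⟩
    refine ⟨∑ k : Fin 12, Polynomial.C (q k) * Polynomial.X ^ (k : ℕ), fun j => ?_⟩
    have hc : ∀ n : Fin 12, (∑ k : Fin 12, Polynomial.C (q k) *
        Polynomial.X ^ (k : ℕ) : Polynomial (ZMod 8)).coeff n = q n := by
      intro n
      simp [Polynomial.finsetSum_coeff, Polynomial.coeff_X_pow, Fin.val_inj]
    rw [hcoeff]
    · simp only [hc, hq]
    · refine Nat.lt_succ_of_le (Polynomial.natDegree_sum_le_of_forall_le _ _ fun k _ => ?_)
      refine (Polynomial.natDegree_C_mul_X_pow_le _ _).trans ?_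
      omega

/-- The extended word of `x^k G`, where `G` has the given coefficients. -/
def row (L : List ℕ) (k : Fin 12) (j : Fin 24) : ZMod 8 :=
  if (j : ℕ) < 23 then
    if (k : ℕ) ≤ j then if (j : ℕ) - k < 12 then ((L.getD (j - k) 0 : ℕ) : ZMod 8) else 0 else 0
  else -∑ i ∈ Finset.range 12, ((L.getD i 0 : ℕ) : ZMod 8)

theorem mem_iff_row (L : List ℕ) (H : Polynomial (ZMod 8))
    (h : ofCoeffs L * H = Polynomial.X ^ 23 - 1) (hL : L.getD 11 0 = 1)
    (hlast : ∀ k, row L k (Fin.last 23) = -∑ j : Fin 23, row L k (Fin.castSucc j))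
    (c : Fin 24 → ZMod 8) :
    ((∃ f : Polynomial (ZMod 8), ∀ j : Fin 23,
      c (Fin.castSucc j) = ((f * ofCoeffs L) %ₘ (Polynomial.X ^ 23 - 1)).coeff (j : ℕ)) ∧
      c (Fin.last 23) = -∑ j : Fin 23, c (Fin.castSucc j)) ↔
    ∃ q : Fin 12 → ZMod 8, ∀ j, c j = ∑ k, q k * row L k j := by
  rw [cyclic_iff (ofCoeffs L) H h (monic_ofCoeffs L hL) (natDegree_ofCoeffs L hL)
    fun j => c (Fin.castSucc j)]
  have hrow : ∀ (k : Fin 12) (j : Fin 23),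
      (if (k : ℕ) ≤ j then (ofCoeffs L).coeff (j - k) else 0) = row L k (Fin.castSucc j) := by
    intro k j
    have hj : ((Fin.castSucc j : Fin 24) : ℕ) = j := rfl
    rw [row, hj, if_pos j.2, coeff_ofCoeffs]
  simp only [hrow]
  constructor
  · rintro ⟨⟨q, hq⟩, hc⟩
    refine ⟨q, fun j => ?_⟩
    refine Fin.lastCases ?_ hq j
    rw [hc]
    simp only [hq, hlast, mul_neg, Finset.sum_neg_distrib, Finset.mul_sum]
    rw [Finset.sum_comm]
  · rintro ⟨q, hq⟩
    refine ⟨⟨q, fun j => hq _⟩, ?_⟩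
    simp only [hq, hlast, mul_neg, Finset.sum_neg_distrib, Finset.mul_sum]
    rw [Finset.sum_comm]

theorem row_iff_enc (row : Fin 12 → Fin 24 → ZMod 8) (p : Fin 24 → Fin 24)
    (hp : Function.Involutive p) (V : Fin 12 → Fin 12 → ZMod 8)
    (hrow : ∀ k l, row k (p (Fin.natAdd 12 l)) =
      ∑ i : Fin 12, row k (p (Fin.castAdd 12 i)) * redMat 8 i l)
    (hV : ∀ i j, ∑ k, V i k * row k (p (Fin.castAdd 12 j)) = if i = j then 1 else 0)
    (c : Fin 24 → ZMod 8) :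
    (∃ q : Fin 12 → ZMod 8, ∀ j, c j = ∑ k, q k * row k j) ↔ ∃ b, c = enc 8 b ∘ p := by
  have henc : ∀ q : Fin 12 → ZMod 8, ∀ j,
      enc 8 (fun i => ∑ k, q k * row k (p (Fin.castAdd 12 i))) j = ∑ k, q k * row k (p j) := by
    intro q
    refine forall_fin24 (P := fun j => enc 8 (fun i => ∑ k, q k * row k (p (Fin.castAdd 12 i))) j =
      ∑ k, q k * row k (p j)) (fun i => ?_) (fun l => ?_)
    · rw [enc_left]
    · rw [enc_right]
      simp only [hrow, Finset.mul_sum, Finset.sum_mul, ← mul_assoc]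
      rw [Finset.sum_comm]
  constructor
  · rintro ⟨q, hq⟩
    refine ⟨fun i => ∑ k, q k * row k (p (Fin.castAdd 12 i)), funext fun j => ?_⟩
    rw [Function.comp_apply, henc q, hp j, hq]
  · rintro ⟨b, rfl⟩
    refine ⟨fun k => ∑ i, b i * V i k, fun j => ?_⟩
    have hb : (fun j => ∑ k, (∑ i, b i * V i k) * row k (p (Fin.castAdd 12 j))) = b := by
      funext j
      simp only [Finset.sum_mul, mul_assoc]
      rw [Finset.sum_comm]
      simp only [← Finset.mul_sum, hV]
      simp
    have := henc (fun k => ∑ i, b i * V i k) (p j)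
    rw [hb, hp j] at this
    exact this

/-- The coefficients of the power series inverse of the first factor, up to degree 11. They give the
inverse of the triangular Toeplitz matrix of its message coordinates. -/
def invCoeffs : List ℕ := [7, 7, 3, 3, 1, 0, 4, 5, 6, 0, 3, 2]

/-- The reversal of the coordinates `0, …, 22`; it exchanges the two codes. -/
def reversal (j : Fin 24) : Fin 24 := if (j : ℕ) < 23 then ⟨22 - j, by omega⟩ else j

theorem code_eq (g : Polynomial (ZMod 2)) (hg : IsQRFactor 2 g) (g3 : Polynomial (ZMod 8))
    (C : Submodule (ZMod 8) (Fin 24 → ZMod 8))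
    (hC : IsLiftedQR (by norm_num : (2 : ℕ) ∣ 8) g g3 C) :
    ∃ p : Fin 24 → Fin 24, Function.Involutive p ∧ ∀ c, c ∈ C ↔ ∃ b, c = enc 8 b ∘ p := by
  obtain ⟨hmonic, hdeg, hdvd, hmap, hmem⟩ := hC
  rcases lift_eq g hg g3 hmonic hdeg hdvd hmap with rfl | rfl
  · refine ⟨id, fun _ => rfl, fun c => ?_⟩
    rw [hmem, mem_iff_row _ _ factorization₁ rfl (by decide +kernel)]
    exact row_iff_enc (row coeffs₁) id (fun _ => rfl)
      (fun i k => if i ≤ k then ((invCoeffs.getD (k - i) 0 : ℕ) : ZMod 8) else 0)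
      (by decide +kernel) (by decide +kernel) c
  · have hrev : Function.Involutive reversal := by unfold Function.Involutive; decide +kernel
    refine ⟨reversal, hrev, fun c => ?_⟩
    rw [hmem, mem_iff_row _ _ factorization₂ rfl (by decide +kernel)]
    exact row_iff_enc (row coeffs₂) reversal hrev
      (fun i k => if (i : ℕ) + k ≤ 11 then -((invCoeffs.getD (11 - k - i) 0 : ℕ) : ZMod 8) else 0)
      (by decide +kernel) (by decide +kernel) c

/-! ### Evaluation of the symmetrized weight enumerator -/

theorem pow_card_filter {ι : Type} [Fintype ι] (y : ℚ) (P : ι → Prop) [DecidablePred P] :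
    y ^ (Finset.univ.filter P).card = ∏ j, if P j then y else 1 := by
  rw [Finset.prod_ite, Finset.prod_const, Finset.prod_const_one, mul_one]

theorem prod_valuation (x : Fin 4 → ℚ) (d : ZMod 8) :
    (∏ i : Fin 3, if d ≠ 0 ∧ padicValNat 2 d.val = (i : ℕ) then x (Fin.castSucc i) else 1) *
      (if d = 0 then x (Fin.last 3) else 1) = x (cls d) := by
  have h : ∀ d : ZMod 8, (d = 0 ∧ cls d = 3) ∨
      (d ≠ 0 ∧ padicValNat 2 d.val = 0 ∧ cls d = 0) ∨
      (d ≠ 0 ∧ padicValNat 2 d.val = 1 ∧ cls d = 1) ∨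
      (d ≠ 0 ∧ padicValNat 2 d.val = 2 ∧ cls d = 2) := by
    decide +kernel
  rw [Fin.prod_univ_three]
  rcases h d with ⟨h1, h2⟩ | ⟨h1, h2, h3⟩ | ⟨h1, h2, h3⟩ | ⟨h1, h2, h3⟩
  · rw [h2]
    simp [h1]
  all_goals
    rw [h3]
    simp [h1, h2]

theorem eval_swe (C : Submodule (ZMod 8) (Fin 24 → ZMod 8)) (x : Fin 4 → ℚ) :
    MvPolynomial.eval x (swe 2 3 C) = ∑ c : Fin 24 → ZMod 8, if c ∈ C then ∏ j, x (cls (c j)) else 0 := by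
  rw [swe, map_sum]
  refine Finset.sum_congr rfl fun c _ => ?_
  split_ifs
  · rw [map_mul, map_prod]
    simp only [map_pow, MvPolynomial.eval_X, pow_card_filter]
    rw [Finset.prod_comm, ← Finset.prod_mul_distrib]
    exact Finset.prod_congr rfl fun j _ => prod_valuation x (c j)
  · exact map_zero _

theorem eval_swe_eq (C : Submodule (ZMod 8) (Fin 24 → ZMod 8)) (p : Fin 24 → Fin 24)
    (hp : Function.Involutive p) (hC : ∀ c, c ∈ C ↔ ∃ b, c = enc 8 b ∘ p) (x : Fin 4 → ℚ) :
    ((MvPolynomial.eval x (swe 2 3 C) : ℚ) : ℂ) = enumerator fun i => (x i : ℂ) := by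
  rw [eval_swe, ← Finset.sum_filter, enumerator]
  push_cast
  symm
  refine Finset.sum_bij (fun b _ => enc 8 b ∘ p) ?_ ?_ ?_ ?_
  · intro b _
    simp only [Finset.mem_filter, Finset.mem_univ, true_and]
    exact (hC _).2 ⟨b, rfl⟩
  · intro b _ b' _ h
    exact enc_injective 8 (hp.surjective.injective_comp_right h)
  · intro c hc
    obtain ⟨b, rfl⟩ := (hC c).1 (Finset.mem_filter.1 hc).2
    exact ⟨b, Finset.mem_univ _, rfl⟩
  · intro b _
    exact (hp.bijective.prod_comp fun j => (x (cls (enc 8 b j)) : ℂ)).symm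

end LiftedGolay

/-- The symmetrized weight enumerator of the `ℤ/8ℤ`-linear extended Golay code. -/
theorem stmt_12 (g : Polynomial (ZMod 2)) (hg : IsQRFactor 2 g)
    (g3 : Polynomial (ZMod 8)) (C3 : Submodule (ZMod 8) (Fin 24 → ZMod 8))
    (hC3 : IsLiftedQR (by norm_num : (2:ℕ) ∣ 8) g g3 C3) :
    swe 2 3 C3 = ((2:ℚ) ^ 12)⁻¹ •
      (((2:ℚ) ^ 12)⁻¹ •
          Fb (4 * X 0) ((X 3 + X 2) - 2 * X 1) ((X 3 + X 2) + 2 * X 1)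
        + Fb (2 * X 1) (X 3 - X 2) (X 3 + X 2)
        - ((X 3 + X 2) ^ 24 + Pb (2 * X 1) (X 3 + X 2))
        + Rb (2 * X 0) (2 * X 1) (X 3 - X 2) (X 3 + X 2)) := by
  obtain ⟨p, hp, hC⟩ := LiftedGolay.code_eq g hg g3 C3 hC3
  refine MvPolynomial.funext fun x => ?_
  have h := LiftedGolay.enumerator_formula (fun i => (x i : ℂ)) _ _ _ rfl rfl rfl
  rw [← LiftedGolay.eval_swe_eq C3 p hp hC x] at h
  simp only [LiftedGolay.nonzeroPart] at h
  apply Rat.cast_injective (α := ℂ)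
  generalize ((MvPolynomial.eval x (swe 2 3 C3) : ℚ) : ℂ) = W at h ⊢
  simp only [Fb, Pb, Qb, Rb, smul_eq_C_mul, map_add, map_sub, map_mul, map_pow, map_neg,
    MvPolynomial.eval_X, MvPolynomial.eval_C, map_ofNat, Rat.cast_add, Rat.cast_sub, Rat.cast_mul,
    Rat.cast_pow, Rat.cast_neg, Rat.cast_inv, Rat.cast_ofNat] at h ⊢
  generalize (x 0 : ℂ) = y at *
  generalize (x 3 : ℂ) + (x 2 : ℂ) = t at *
  generalize (x 3 : ℂ) - (x 2 : ℂ) = w at *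
  generalize 2 * (x 1 : ℂ) = v at *
  have h3 : (8 ^ 12 * 4 ^ 12 : ℂ) ≠ 0 := by norm_num
  apply mul_left_cancel₀ h3
  rw [h]
  ring
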